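/- Fix δ > 0 and ε > 0. Then there exist η > 0 and n₀ such that for all n ≥ n₀ and all integers M, k with M/N ∈ [δ, 1−δ] and k/n ∈ [δ, 1−δ], with probability at least 1 − exp(−n^η) over G = G_{n,M} the following holds: for all z ∈ ℝ, |P_S(e(S) ≤ z) − P(Z ≤ z)| ≤ n^{−1/4+ε}, where S is a uniformly random k-element subset of [n] and Z is a normal random variable with mean K·M/N and variance λ·n². -/

import Mathlib

open Finset MeasureTheory ProbabilityTheory

noncomputable section

/-- Uniform probability of an event `P` over a finite sample space `Ω`. -/
def Pru {α : Type*} (Ω : Finset α) (P : α → Prop) : ℝ := by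
  classical exact ((Ω.filter P).card : ℝ) / Ω.card

/-- Expectation of `f` under the uniform distribution on `Ω`. -/
def Exu {α : Type*} (Ω : Finset α) (f : α → ℝ) : ℝ := (∑ a ∈ Ω, f a) / Ω.card

/-- Variance of `f` under the uniform distribution on `Ω`. -/
def Varu {α : Type*} (Ω : Finset α) (f : α → ℝ) : ℝ := Exu Ω (fun a => (f a - Exu Ω f) ^ 2)

/-- Conditional expectation of `f` given the value of `g`, under uniform distribution on `Ω`. -/
def condExpU {α β : Type*} (Ω : Finset α) (f : α → ℝ) (g : α → β) (ω : α) : ℝ := by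
  classical exact Exu (Ω.filter (fun ω' => g ω' = g ω)) f

/-- The edge set of the complete graph on `[n]`. -/
def completeEdges (n : ℕ) : Finset (Sym2 (Fin n)) := by
  classical exact Finset.univ.filter (fun e => ¬ e.IsDiag)

/-- A finset of `Sym2`s is a graph if it has no loops. -/
def IsGraph {n : ℕ} (G : Finset (Sym2 (Fin n))) : Prop := ∀ e ∈ G, ¬ e.IsDiag

/-- The sample space of `G_{n,M}`: all graphs on `[n]` with exactly `M` edges. -/
def graphsM (n M : ℕ) : Finset (Finset (Sym2 (Fin n))) := by
  classical exact (completeEdges n).powerset.filter (fun G => G.card = M)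

/-- `e(S)`: number of edges of `G` with both endpoints in `S`. -/
def edgesIn {n : ℕ} (G : Finset (Sym2 (Fin n))) (S : Finset (Fin n)) : ℕ := by
  classical exact (G.filter (fun e => ∀ v ∈ e, v ∈ S)).card

/-- `d_S(v)`: number of neighbours of `v` (in graph `G`) lying in `S`. -/
def dS {n : ℕ} (G : Finset (Sym2 (Fin n))) (S : Finset (Fin n)) (v : Fin n) : ℕ := by
  classical exact (S.filter (fun w => s(v, w) ∈ G)).card

/-- All `k`-element subsets of `[n]`. -/
def kSets (n k : ℕ) : Finset (Finset (Fin n)) := Finset.univ.powersetCard k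

/-- Probability of an event under the uniform random graph `G_{n,M}`. -/
def PrGnM (n M : ℕ) (P : Finset (Sym2 (Fin n)) → Prop) : ℝ := Pru (graphsM n M) P

/-- Probability of an event under the binomial random graph `G_{n,p}`. -/
def PrGnp (n : ℕ) (p : ℝ) (P : Finset (Sym2 (Fin n)) → Prop) : ℝ := by
  classical exact ∑ G ∈ (completeEdges n).powerset,
    if (P G) then p ^ G.card * (1 - p) ^ ((completeEdges n).card - G.card) else 0

/-- `N = n(n-1)/2` as a real number. -/
def Nr (n : ℕ) : ℝ := (n : ℝ) * ((n : ℝ) - 1) / 2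

/-- `K = k(k-1)/2` as a real number. -/
def Kr (k : ℕ) : ℝ := (k : ℝ) * ((k : ℝ) - 1) / 2

/-- `λ = ((n²-k²)k²/(2n⁴))·(M(N-M)/N²)`. -/
def lamP (n M k : ℕ) : ℝ :=
  (((n:ℝ)^2 - (k:ℝ)^2) * (k:ℝ)^2 / (2 * (n:ℝ)^4)) * ((M:ℝ) * (Nr n - (M:ℝ)) / (Nr n)^2)

/-- The mean `K·M/N`. -/
def muP (n M k : ℕ) : ℝ := Kr k * (M:ℝ) / Nr n

/-- `W = (e(S) - K·M/N)/n`. -/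
def Wfun (n M k : ℕ) (G : Finset (Sym2 (Fin n))) (S : Finset (Fin n)) : ℝ :=
  ((edgesIn G S : ℝ) - muP n M k) / n

/-- `V = Σ_v d(v)² - n·d(G)²`, i.e. `n` times the degree variance. -/
def Vdeg {n : ℕ} (G : Finset (Sym2 (Fin n))) : ℝ :=
  (∑ v : Fin n, (dS G Finset.univ v : ℝ) ^ 2) - (n:ℝ) * (2 * (G.card : ℝ) / n) ^ 2

/-- Gaussian CDF with mean `m` and variance `v`. -/
def gaussCdf (m v z : ℝ) : ℝ := ((gaussianReal m v.toNNReal) (Set.Iic z)).toReal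

/-- Gaussian measure of a set, mean `m`, variance `v`. -/
def gaussMeas (m v : ℝ) (A : Set ℝ) : ℝ := ((gaussianReal m v.toNNReal) A).toReal

/-- Gaussian density with mean `m` and variance `v`. -/
def gaussPdf (m v x : ℝ) : ℝ := gaussianPDFReal m v.toNNReal x

/-- `P(Y ∈ ·)` for `Y ~ Bin(ν, p)`. -/
def binomPr (ν : ℕ) (p : ℝ) (P : ℕ → Prop) : ℝ := by
  classical exact ∑ j ∈ Finset.range (ν + 1),
    if (P j) then (ν.choose j : ℝ) * p ^ j * (1 - p) ^ (ν - j) else 0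

/-- Sample space for "uniform `k`-set `S`, then uniform `x ∈ S` and `x̄ ∈ S̄`". -/
def SwapΩ (n k : ℕ) : Finset (Σ _ : Finset (Fin n), Fin n × Fin n) :=
  (kSets n k).sigma (fun S => S ×ˢ Sᶜ)

/-- A triple `(a, r, t)` is valid for `β`. -/
def ValidTriple (β : ℝ) (n a r t : ℕ) : Prop :=
  a ≤ r ∧
  (∃ c : ℝ, 1/2 ≤ c ∧ c ≤ 1 ∧ (a : ℝ) = c * (t:ℝ) ^ ((3:ℝ)/2) * (n:ℝ) ^ (2*β - 1/2)) ∧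
  (r : ℝ) ≤ (n:ℝ) ^ (-β) * Real.sqrt ((n:ℝ) * (t:ℝ))

/-!
Write `κ = K/N` and, for a graph `G` and a `k`-set `S`, let `W_S(G) = ∑_{e ∈ G} (1_{e ⊆ S} - κ)`.
If `G` has `M` edges, then `W_S(G) = e(S) - K·M/N`. The proof studies the smoothed distribution
function `F_z(G) = E_S Φ((z - W_S(G)) / s)` as a function of the random graph `G`.

*Concentration.* First let the edges be independent with probability `p = M/N`. The discrete
derivative of `F_z` at an edge `e` is, up to `O(1/s²)`, the correlation over `S` of `1_{e ⊆ S} - κ`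
with a function bounded by `1/s`. The covariance matrix of the centred indicators has absolute row
sums at most `4n`, so almost orthogonality bounds the squared gradient of `F_z` by `9n/s²`. The
Efron–Stein inequality applied to `exp(θF_z/2)`, iterated by halving `θ`, turns this into
exponential concentration of `F_z` at scale `√n/s`.

*Mean.* For each fixed `S`, averaging over `G` leaves a sum of independent variables, and the
Lindeberg method shows that `E F_z` is within `O(N/s³)` of `Φ(z / √(s² + p(1-p)K(1-κ)))`. The
variance `p(1-p)K(1-κ)` equals `λn²` up to `O(n)`.

*Fixing the number of edges.* Exactly `M` edges occur with probability at least `1/(N+1)`, so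
passing to `G_{n,M}` costs a factor `N + 1`. As `e(S)` is an integer in `[0, M]`, a union bound over
`O(N)` values of `z` suffices.

*Removing the smoothing.* Shifting `z` by `±xs` with `x = n^(ε/2)` sandwiches the distribution
function of `e(S)` between smoothed ones. With `s = n^(3/4)` the errors `√n/s`, `N/s³`, `s²/n²` and
`s/n` are all `O(n^(-1/4))`, and the factors `x` are absorbed by `n^ε`.
-/

open scoped BigOperators

/-! ### The standard normal distribution -/

/-- The standard normal density `φ`. -/
def stdNormalPdf : ℝ → ℝ := gaussianPDFReal 0 1

/-- The standard normal distribution function `Φ`. -/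
def stdNormalCdf : ℝ → ℝ := cdf (gaussianReal 0 1)

local notation "φ" => stdNormalPdf
local notation "Φ" => stdNormalCdf

lemma stdNormalPdf_eq (x : ℝ) : φ x = (√(2 * Real.pi))⁻¹ * Real.exp (-x ^ 2 / 2) := by
  simp [stdNormalPdf, gaussianPDFReal]

lemma stdNormalPdf_nonneg (x : ℝ) : 0 ≤ φ x := gaussianPDFReal_nonneg _ _ _

lemma mul_stdNormalPdf_le_one {x y : ℝ} (h : y ≤ 2 * (1 + x ^ 2 / 2 + x ^ 4 / 8)) :
    y * φ x ≤ 1 := by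
  have h_exp : 1 + x ^ 2 / 2 + x ^ 4 / 8 ≤ Real.exp (x ^ 2 / 2) := by
    have := Real.quadratic_le_exp_of_nonneg (x := x ^ 2 / 2) (by positivity)
    linarith
  have h_sqrt : (2 : ℝ) ≤ √(2 * Real.pi) :=
    Real.le_sqrt_of_sq_le (by linarith [Real.pi_gt_three])
  have hy : y ≤ √(2 * Real.pi) * Real.exp (x ^ 2 / 2) := h.trans (by gcongr)
  rw [stdNormalPdf_eq, neg_div, Real.exp_neg, ← mul_inv, ← div_eq_mul_inv]
  exact div_le_one_of_le₀ hy (by positivity)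

lemma stdNormalPdf_le_one (x : ℝ) : φ x ≤ 1 := by
  simpa using mul_stdNormalPdf_le_one (x := x) (y := 1)
    (by linarith [sq_nonneg x, pow_nonneg (sq_nonneg x) 2])

lemma abs_mul_stdNormalPdf_le_one (x : ℝ) : |x * φ x| ≤ 1 := by
  rw [abs_mul, abs_of_nonneg (stdNormalPdf_nonneg x)]
  refine mul_stdNormalPdf_le_one ?_
  rw [← sq_abs x]
  nlinarith [sq_nonneg (|x| - 1), sq_nonneg (x ^ 2)]

lemma abs_one_sub_sq_mul_stdNormalPdf_le_one (x : ℝ) : |(1 - x ^ 2) * φ x| ≤ 1 := by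
  rw [abs_mul, abs_of_nonneg (stdNormalPdf_nonneg x)]
  refine mul_stdNormalPdf_le_one (abs_le.2 ⟨?_, ?_⟩) <;>
    nlinarith [sq_nonneg x, sq_nonneg (x ^ 2)]

lemma abs_cube_mul_stdNormalPdf_le_one (x : ℝ) : |x ^ 3 * φ x| ≤ 1 := by
  rw [abs_mul, abs_of_nonneg (stdNormalPdf_nonneg x)]
  refine mul_stdNormalPdf_le_one ?_
  rw [abs_pow, ← sq_abs x, ← (show Even 4 by decide).pow_abs]
  nlinarith [mul_nonneg (sq_nonneg |x|) (sq_nonneg (|x| - 2))]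

lemma hasDerivAt_stdNormalPdf (x : ℝ) : HasDerivAt φ (-(x * φ x)) x := by
  have h_exponent : HasDerivAt (fun x : ℝ => -x ^ 2 / 2) (-x) x :=
    ((hasDerivAt_pow 2 x).neg.div_const 2).congr_deriv (by ring)
  rw [show φ = fun x => (√(2 * Real.pi))⁻¹ * Real.exp (-x ^ 2 / 2) from funext stdNormalPdf_eq]
  exact (h_exponent.exp.const_mul _).congr_deriv (by ring)

lemma hasDerivAt_mul_stdNormalPdf (x : ℝ) :
    HasDerivAt (fun x => x * φ x) ((1 - x ^ 2) * φ x) x :=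
  ((hasDerivAt_id x).mul (hasDerivAt_stdNormalPdf x)).congr_deriv (by simp only [id]; ring)

lemma continuous_stdNormalPdf : Continuous φ :=
  continuous_iff_continuousAt.2 fun x => (hasDerivAt_stdNormalPdf x).continuousAt

lemma stdNormalCdf_eq_integral (x : ℝ) : Φ x = ∫ y in Set.Iic x, φ y := by
  rw [stdNormalCdf, cdf_eq_real, measureReal_def, gaussianReal_apply_eq_integral _ one_ne_zero]
  exact ENNReal.toReal_ofReal (integral_nonneg stdNormalPdf_nonneg)

lemma hasDerivAt_stdNormalCdf (x : ℝ) : HasDerivAt Φ (φ x) x := by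
  have hφ : Integrable φ := integrable_gaussianPDFReal 0 1
  have hΦ : Φ = fun y => Φ 0 + ∫ t in (0 : ℝ)..y, φ t := by
    funext y
    rw [stdNormalCdf_eq_integral, stdNormalCdf_eq_integral,
      ← intervalIntegral.integral_Iic_sub_Iic hφ.integrableOn hφ.integrableOn]
    ring
  rw [hΦ]
  exact (intervalIntegral.integral_hasDerivAt_right hφ.intervalIntegrable
    (continuous_stdNormalPdf.stronglyMeasurableAtFilter _ _)
    continuous_stdNormalPdf.continuousAt).const_add _

lemma stdNormalCdf_nonneg (x : ℝ) : 0 ≤ Φ x := cdf_nonneg _ x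

lemma stdNormalCdf_le_one (x : ℝ) : Φ x ≤ 1 := cdf_le_one _ x

lemma monotone_stdNormalCdf : Monotone Φ := monotone_cdf _

lemma stdNormalCdf_neg_le {x : ℝ} (hx : 0 ≤ x) : Φ (-x) ≤ Real.exp (-x ^ 2 / 2) := by
  have h := measure_le_le_exp_mul_mgf (μ := gaussianReal 0 1) (X := id) (t := -x) (-x)
    (neg_nonpos.2 hx) (integrable_exp_mul_gaussianReal _)
  rw [mgf_id_gaussianReal, ← Real.exp_add, NNReal.coe_one] at h
  rw [stdNormalCdf, cdf_eq_real]
  exact h.trans_eq (by ring_nf)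

lemma one_sub_stdNormalCdf_le {x : ℝ} (hx : 0 ≤ x) : 1 - Φ x ≤ Real.exp (-x ^ 2 / 2) := by
  have h := measure_ge_le_exp_mul_mgf (μ := gaussianReal 0 1) (X := id) x hx
    (integrable_exp_mul_gaussianReal x)
  rw [mgf_id_gaussianReal, ← Real.exp_add, NNReal.coe_one] at h
  rw [stdNormalCdf, cdf_eq_real, ← probReal_compl_eq_one_sub measurableSet_Iic, Set.compl_Iic]
  exact (measureReal_mono Set.Ioi_subset_Ici_self).trans (h.trans_eq (by ring_nf))

lemma gaussCdf_eq_stdNormalCdf {m v z : ℝ} (hv : 0 < v) :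
    gaussCdf m v z = Φ ((z - m) / √v) := by
  have h_map : gaussianReal m v.toNNReal = (gaussianReal 0 1).map (fun x => √v * x + m) := by
    have h_scale : (gaussianReal 0 1).map (√v * ·) = gaussianReal 0 v.toNNReal := by
      rw [gaussianReal_map_const_mul]
      congr 1
      · simp
      · ext; simp [Real.sq_sqrt hv.le, hv.le]
    rw [show (fun x => √v * x + m) = (· + m) ∘ (√v * ·) from rfl,
      ← Measure.map_map (by fun_prop) (by fun_prop), h_scale, gaussianReal_map_add_const, zero_add]
  have h_preimage : (fun x => √v * x + m) ⁻¹' Set.Iic z = Set.Iic ((z - m) / √v) := by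
    ext x
    simp only [Set.mem_preimage, Set.mem_Iic]
    rw [le_div_iff₀ (Real.sqrt_pos.2 hv), le_sub_iff_add_le, mul_comm]
  rw [gaussCdf, h_map, Measure.map_apply (by fun_prop) measurableSet_Iic, h_preimage,
    stdNormalCdf, cdf_eq_real, measureReal_def]

lemma abs_le_abs_sub_pow_succ_of_abs_deriv_le {g g' : ℝ → ℝ} {s : Set ℝ} {c x : ℝ}
    (hs : Convex ℝ s) (hc : c ∈ s) (hx : x ∈ s) (hgc : g c = 0) (m : ℕ)
    (hg : ∀ y ∈ s, HasDerivAt g (g' y) y) (hg' : ∀ y ∈ s, |g' y| ≤ |y - c| ^ m) :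
    |g x| ≤ |x - c| ^ (m + 1) := by
  have hsub : segment ℝ c x ⊆ s := hs.segment_subset hc hx
  have h_bound : ∀ y ∈ segment ℝ c x, ‖g' y‖ ≤ |x - c| ^ m := fun y hy => by
    have hyx : |y - c| ≤ |x - c| := by
      rw [segment_eq_uIcc] at hy
      simpa only [abs_sub_comm] using Set.abs_sub_left_of_mem_uIcc hy
    exact (hg' y (hsub hy)).trans (by gcongr)
  have h_mvt := Convex.norm_image_sub_le_of_norm_hasDerivWithin_le
    (fun y hy => (hg y (hsub hy)).hasDerivWithinAt) h_bound (convex_segment c x)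
    (left_mem_segment ℝ c x) (right_mem_segment ℝ c x)
  simpa [hgc, pow_succ] using h_mvt

lemma abs_stdNormalPdf_sub_le (x y : ℝ) : |φ y - φ x| ≤ |y - x| := by
  simpa using abs_le_abs_sub_pow_succ_of_abs_deriv_le (g := fun y => φ y - φ x) convex_univ
    trivial trivial (sub_self _) 0 (fun y _ => (hasDerivAt_stdNormalPdf y).sub_const _)
    (fun y _ => by simpa using abs_mul_stdNormalPdf_le_one y) (x := y)

lemma abs_stdNormalCdf_sub_le (x y : ℝ) : |Φ y - Φ x| ≤ |y - x| := by
  simpa using abs_le_abs_sub_pow_succ_of_abs_deriv_le (g := fun y => Φ y - Φ x) convex_univ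
    trivial trivial (sub_self _) 0 (fun y _ => (hasDerivAt_stdNormalCdf y).sub_const _)
    (fun y _ => by
      simpa [abs_of_nonneg (stdNormalPdf_nonneg y)] using stdNormalPdf_le_one y) (x := y)

lemma abs_stdNormalCdf_sub_taylor_one_le (x y : ℝ) :
    |Φ y - Φ x - φ x * (y - x)| ≤ |y - x| ^ 2 :=
  abs_le_abs_sub_pow_succ_of_abs_deriv_le (g := fun y => Φ y - Φ x - φ x * (y - x))
    convex_univ trivial trivial (by simp) 1
    (fun y _ => (((hasDerivAt_stdNormalCdf y).sub_const _).sub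
      (((hasDerivAt_id y).sub_const x).const_mul (φ x))).congr_deriv (by rw [mul_one]))
    (fun y _ => by simpa using abs_stdNormalPdf_sub_le x y)

lemma abs_stdNormalPdf_sub_taylor_one_le (x y : ℝ) :
    |φ y - φ x + x * φ x * (y - x)| ≤ |y - x| ^ 2 := by
  have h_lipschitz (y : ℝ) : |-(y * φ y) + x * φ x| ≤ |y - x| ^ 1 :=
    abs_le_abs_sub_pow_succ_of_abs_deriv_le (g := fun y => -(y * φ y) + x * φ x) convex_univ
      trivial trivial (by ring) 0 (fun y _ => (hasDerivAt_mul_stdNormalPdf y).neg.add_const _)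
      (fun y _ => by simpa using abs_one_sub_sq_mul_stdNormalPdf_le_one y)
  exact abs_le_abs_sub_pow_succ_of_abs_deriv_le (g := fun y => φ y - φ x + x * φ x * (y - x))
    convex_univ trivial trivial (by simp) 1
    (fun y _ => (((hasDerivAt_stdNormalPdf y).sub_const _).add
      (((hasDerivAt_id y).sub_const x).const_mul (x * φ x))).congr_deriv (by rw [mul_one]))
    (fun y _ => h_lipschitz y)

lemma abs_stdNormalCdf_sub_taylor_two_le (x y : ℝ) :
    |Φ y - Φ x - φ x * (y - x) + x * φ x * (y - x) ^ 2 / 2| ≤ |y - x| ^ 3 :=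
  abs_le_abs_sub_pow_succ_of_abs_deriv_le
    (g := fun y => Φ y - Φ x - φ x * (y - x) + x * φ x * (y - x) ^ 2 / 2)
    convex_univ trivial trivial (by simp) 2
    (fun y _ => ((((hasDerivAt_stdNormalCdf y).sub_const _).sub
      (((hasDerivAt_id y).sub_const x).const_mul (φ x))).add
      (((((hasDerivAt_id y).sub_const x).pow 2).const_mul (x * φ x)).div_const 2)).congr_deriv
        (by simp only [id]; push_cast; ring))
    (fun y _ => abs_stdNormalPdf_sub_taylor_one_le x y)

lemma hasDerivAt_div_sqrt (a : ℝ) {t : ℝ} (ht : 0 < t) :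
    HasDerivAt (fun t => a / √t) (-(a / √t) / (2 * t)) t := by
  have h := (hasDerivAt_const t a).div (Real.hasDerivAt_sqrt ht.ne') (Real.sqrt_pos.2 ht).ne'
  refine h.congr_deriv ?_
  rw [Real.sq_sqrt ht.le]
  field_simp
  ring

lemma hasDerivAt_stdNormalCdf_div_sqrt (a : ℝ) {t : ℝ} (ht : 0 < t) :
    HasDerivAt (fun t => Φ (a / √t)) (-(a / √t * φ (a / √t) / (2 * t))) t :=
  ((hasDerivAt_stdNormalCdf _).comp t (hasDerivAt_div_sqrt a ht)).congr_deriv (by ring)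

lemma hasDerivAt_deriv_stdNormalCdf_div_sqrt (a : ℝ) {t : ℝ} (ht : 0 < t) :
    HasDerivAt (fun t => -(a / √t * φ (a / √t) / (2 * t)))
      ((3 * (a / √t * φ (a / √t)) - (a / √t) ^ 3 * φ (a / √t)) / (4 * t ^ 2)) t := by
  have h_num := (hasDerivAt_mul_stdNormalPdf _).comp t (hasDerivAt_div_sqrt a ht)
  have h_den : HasDerivAt (fun t : ℝ => 2 * t) 2 t := by
    simpa using (hasDerivAt_id t).const_mul 2
  refine (h_num.div h_den (by positivity)).neg.congr_deriv ?_
  simp only [Function.comp_apply]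
  field_simp
  ring

lemma abs_stdNormalCdf_div_sqrt_sub_le (a : ℝ) {t : ℝ} (ht : 1 ≤ t) :
    |Φ (a / √t) - Φ a| ≤ t - 1 := by
  have h := abs_le_abs_sub_pow_succ_of_abs_deriv_le (g := fun t => Φ (a / √t) - Φ a)
    (convex_Ici 1) Set.self_mem_Ici ht (by simp) 0
    (fun s hs => (hasDerivAt_stdNormalCdf_div_sqrt a (zero_lt_one.trans_le hs)).sub_const _)
    (fun s hs => by
      rw [Set.mem_Ici] at hs
      rw [abs_neg, abs_div, abs_of_nonneg (by linarith : 0 ≤ 2 * s), pow_zero]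
      exact div_le_one_of_le₀ ((abs_mul_stdNormalPdf_le_one _).trans (by linarith)) (by linarith))
  simpa [abs_of_nonneg (sub_nonneg.2 ht)] using h

/-- The linear term cancels the second order term of `abs_stdNormalCdf_sub_taylor_two_le` averaged
over a centred perturbation of variance `t - 1`: this is the heat equation. -/
lemma abs_stdNormalCdf_div_sqrt_sub_taylor_le (a : ℝ) {t : ℝ} (ht : 1 ≤ t) :
    |Φ (a / √t) - Φ a + a * φ a * (t - 1) / 2| ≤ (t - 1) ^ 2 := by
  have h_deriv (t : ℝ) (ht : 1 ≤ t) :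
      |-(a / √t * φ (a / √t) / (2 * t)) + a * φ a / 2| ≤ |t - 1| ^ 1 :=
    abs_le_abs_sub_pow_succ_of_abs_deriv_le
      (g := fun t => -(a / √t * φ (a / √t) / (2 * t)) + a * φ a / 2)
      (convex_Ici 1) Set.self_mem_Ici ht (by simp) 0
      (fun s hs =>
        (hasDerivAt_deriv_stdNormalCdf_div_sqrt a (zero_lt_one.trans_le hs)).add_const _)
      (fun s hs => by
        rw [Set.mem_Ici] at hs
        have h1 := abs_le.1 (abs_mul_stdNormalPdf_le_one (a / √s))
        have h3 := abs_le.1 (abs_cube_mul_stdNormalPdf_le_one (a / √s))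
        rw [abs_div, abs_of_nonneg (by positivity : 0 ≤ 4 * s ^ 2), pow_zero]
        refine div_le_one_of_le₀ ?_ (by positivity)
        exact (abs_le.2 ⟨by linarith, by linarith⟩ : _ ≤ (4 : ℝ)).trans (by nlinarith))
  have h := abs_le_abs_sub_pow_succ_of_abs_deriv_le
    (g := fun t => Φ (a / √t) - Φ a + a * φ a * (t - 1) / 2)
    (convex_Ici 1) Set.self_mem_Ici ht (by simp) 1
    (fun s hs => ((((hasDerivAt_stdNormalCdf_div_sqrt a (zero_lt_one.trans_le hs)).sub_const
      (Φ a)).add ((((hasDerivAt_id s).sub_const 1).const_mul (a * φ a)).div_const 2)).congr_deriv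
        (by rw [mul_one])))
    (fun s hs => h_deriv s hs)
  rwa [sq_abs] at h

lemma abs_stdNormalCdf_div_sqrt_sub_div_sqrt_le {a b : ℝ} (ha : 0 < a) (hab : a ≤ b) (z : ℝ) :
    |Φ (z / √b) - Φ (z / √a)| ≤ (b - a) / a := by
  have h := abs_stdNormalCdf_div_sqrt_sub_le (z / √a) ((one_le_div₀ ha).2 hab)
  rwa [div_div, ← Real.sqrt_mul ha.le, mul_div_cancel₀ b ha.ne', ← div_self ha.ne', ← sub_div] at h

/-! ### Concentration for Bernoulli random subsets -/

section Bernoulli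

variable {α : Type*}

/-- The expectation of `F` over the random subset of `s` that contains each element independently
with probability `p`. -/
def bernoulliExp (p : ℝ) (s : Finset α) (F : Finset α → ℝ) : ℝ :=
  ∑ G ∈ s.powerset, p ^ #G * (1 - p) ^ (#s - #G) * F G

/-- The probability that the random subset of `s` that contains each element independently with
probability `p` satisfies `P`. -/
def bernoulliPr (p : ℝ) (s : Finset α) (P : Finset α → Prop) : ℝ :=
  bernoulliExp p s ({G | P G}.indicator 1)

/-- The discrete derivative of `F` in the coordinate `e`: the increment of `F` when `e` is switched
on, whether or not `e` lies in the given set. -/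
def discreteDeriv [DecidableEq α] (e : α) (F : Finset α → ℝ) (G : Finset α) : ℝ :=
  F (insert e G) - F (G.erase e)

lemma bernoulliExp_empty (p : ℝ) (F : Finset α → ℝ) : bernoulliExp p ∅ F = F ∅ := by
  simp [bernoulliExp]

lemma bernoulliExp_insert [DecidableEq α] (p : ℝ) {a : α} {s : Finset α} (ha : a ∉ s)
    (F : Finset α → ℝ) :
    bernoulliExp p (insert a s) F =
      (1 - p) * bernoulliExp p s F + p * bernoulliExp p s (fun G => F (insert a G)) := by
  simp only [bernoulliExp, sum_powerset_insert ha, mul_sum]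
  congr 1 <;> refine sum_congr rfl fun G hG => ?_
  · rw [card_insert_of_notMem ha, Nat.sub_add_comm (card_le_card (mem_powerset.1 hG)), pow_succ]
    ring
  · rw [card_insert_of_notMem ha, card_insert_of_notMem (notMem_of_mem_powerset_of_notMem hG ha),
      Nat.add_sub_add_right, pow_succ]
    ring

lemma bernoulliExp_congr (p : ℝ) {s : Finset α} {F H : Finset α → ℝ} (h : ∀ G ⊆ s, F G = H G) :
    bernoulliExp p s F = bernoulliExp p s H :=
  sum_congr rfl fun G hG => by rw [h G (mem_powerset.1 hG)]

lemma bernoulliExp_add (p : ℝ) (s : Finset α) (F H : Finset α → ℝ) :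
    bernoulliExp p s (fun G => F G + H G) = bernoulliExp p s F + bernoulliExp p s H := by
  simp only [bernoulliExp, mul_add, sum_add_distrib]

lemma bernoulliExp_sub (p : ℝ) (s : Finset α) (F H : Finset α → ℝ) :
    bernoulliExp p s (fun G => F G - H G) = bernoulliExp p s F - bernoulliExp p s H := by
  simp only [bernoulliExp, mul_sub, sum_sub_distrib]

lemma bernoulliExp_const_mul (p : ℝ) (s : Finset α) (c : ℝ) (F : Finset α → ℝ) :
    bernoulliExp p s (fun G => c * F G) = c * bernoulliExp p s F := by
  simp only [bernoulliExp, mul_sum, mul_left_comm]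

lemma bernoulliExp_const (p : ℝ) (s : Finset α) (c : ℝ) : bernoulliExp p s (fun _ => c) = c := by
  rw [bernoulliExp, ← sum_mul, sum_pow_mul_eq_add_pow, add_sub_cancel, one_pow, one_mul]

lemma bernoulliExp_sum {ι : Type*} (p : ℝ) (s : Finset α) (t : Finset ι)
    (F : ι → Finset α → ℝ) :
    bernoulliExp p s (fun G => ∑ i ∈ t, F i G) = ∑ i ∈ t, bernoulliExp p s (F i) := by
  simp only [bernoulliExp, mul_sum]
  exact sum_comm

variable {p : ℝ} {s : Finset α} {F H : Finset α → ℝ} {V : ℝ}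

lemma bernoulliExp_mono (hp : p ∈ Set.Icc 0 1) (h : ∀ G ⊆ s, F G ≤ H G) :
    bernoulliExp p s F ≤ bernoulliExp p s H :=
  sum_le_sum fun G hG => mul_le_mul_of_nonneg_left (h G (mem_powerset.1 hG))
    (mul_nonneg (pow_nonneg hp.1 _) (pow_nonneg (sub_nonneg.2 hp.2) _))

lemma bernoulliExp_nonneg (hp : p ∈ Set.Icc 0 1) (h : ∀ G ⊆ s, 0 ≤ F G) :
    0 ≤ bernoulliExp p s F :=
  (bernoulliExp_const p s 0).symm.trans_le (bernoulliExp_mono hp h)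

lemma sq_bernoulliExp_le (hp : p ∈ Set.Icc 0 1) :
    bernoulliExp p s F ^ 2 ≤ bernoulliExp p s (fun G => F G ^ 2) := by
  set m := bernoulliExp p s F with hm
  have h_var : 0 ≤ bernoulliExp p s (fun G => F G ^ 2 - 2 * m * F G + m ^ 2) :=
    bernoulliExp_nonneg hp fun G _ => by linarith [sq_nonneg (F G - m)]
  rw [bernoulliExp_add, bernoulliExp_sub, bernoulliExp_const_mul, bernoulliExp_const, ← hm] at h_var
  linarith

lemma bernoulliPr_mono (hp : p ∈ Set.Icc 0 1) {P Q : Finset α → Prop}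
    (h : ∀ G ⊆ s, P G → Q G) : bernoulliPr p s P ≤ bernoulliPr p s Q := by
  refine bernoulliExp_mono hp fun G hG => ?_
  by_cases hP : P G
  · simp [hP, h G hG hP]
  · rw [Set.indicator_of_notMem (show G ∉ {G | P G} from hP)]
    exact Set.indicator_nonneg (fun _ _ => zero_le_one) G

lemma bernoulliPr_exists_le {ι : Type*} (hp : p ∈ Set.Icc 0 1) (t : Finset ι)
    (P : ι → Finset α → Prop) :
    bernoulliPr p s (fun G => ∃ i ∈ t, P i G) ≤ ∑ i ∈ t, bernoulliPr p s (P i) := by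
  classical
  simp only [bernoulliPr]
  rw [← bernoulliExp_sum]
  refine bernoulliExp_mono hp fun G _ => ?_
  have h_nonneg : ∀ i ∈ t, 0 ≤ {G | P i G}.indicator (1 : Finset α → ℝ) G :=
    fun i _ => Set.indicator_nonneg (fun _ _ => zero_le_one) G
  by_cases h : ∃ i ∈ t, P i G
  · obtain ⟨i, hi, hPi⟩ := h
    rw [Set.indicator_of_mem (show G ∈ {G | ∃ i ∈ t, P i G} from ⟨i, hi, hPi⟩)]
    exact (Set.indicator_of_mem (show G ∈ {G | P i G} from hPi) 1).symm.trans_le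
      (single_le_sum h_nonneg hi)
  · rw [Set.indicator_of_notMem (show G ∉ {G | ∃ i ∈ t, P i G} from h)]
    exact sum_nonneg h_nonneg

lemma bernoulliPr_or_le (hp : p ∈ Set.Icc 0 1) (P Q : Finset α → Prop) :
    bernoulliPr p s (fun G => P G ∨ Q G) ≤ bernoulliPr p s P + bernoulliPr p s Q := by
  simpa [add_comm] using
    bernoulliPr_exists_le (s := s) hp Finset.univ (fun b : Bool => if b then Q else P)

lemma bernoulliPr_le_exp_neg_mul (hp : p ∈ Set.Icc 0 1) (x : ℝ) :
    bernoulliPr p s (fun G => x ≤ F G) ≤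
      Real.exp (-x) * bernoulliExp p s (fun G => Real.exp (F G)) := by
  rw [← bernoulliExp_const_mul]
  refine bernoulliExp_mono hp fun G _ =>
    Set.indicator_apply_le' (fun hG => ?_) fun _ => by positivity
  rw [← Real.exp_add]
  exact Real.one_le_exp (by linarith [show x ≤ F G from hG])

section EfronStein

variable [DecidableEq α]

lemma discreteDeriv_insert_self (e : α) (F : Finset α → ℝ) (G : Finset α) :
    discreteDeriv e F (insert e G) = discreteDeriv e F G := by
  rw [discreteDeriv, discreteDeriv, insert_idem, erase_insert_eq_erase]

lemma discreteDeriv_insert_of_ne {a e : α} (h : e ≠ a) (F : Finset α → ℝ) (G : Finset α) :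
    discreteDeriv e F (insert a G) = discreteDeriv e (fun G => F (insert a G)) G := by
  rw [discreteDeriv, discreteDeriv, insert_comm, erase_insert_of_ne h.symm]

lemma sq_bernoulliExp_insert_sub_le (hp : p ∈ Set.Icc 0 1) {a : α} (ha : a ∉ s) :
    (bernoulliExp p s (fun G => F (insert a G)) - bernoulliExp p s F) ^ 2 ≤
      bernoulliExp p (insert a s) (fun G => discreteDeriv a F G ^ 2) := by
  rw [bernoulliExp_insert p ha]
  simp only [discreteDeriv_insert_self]
  rw [← add_mul, sub_add_cancel, one_mul, ← bernoulliExp_sub]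
  refine (sq_bernoulliExp_le hp).trans_eq (bernoulliExp_congr p fun G hG => ?_)
  rw [discreteDeriv, erase_eq_of_notMem fun h => ha (hG h)]

lemma bernoulli_efron_stein (hp : p ∈ Set.Icc 0 1) (s : Finset α) (F : Finset α → ℝ) :
    bernoulliExp p s (fun G => F G ^ 2) - bernoulliExp p s F ^ 2 ≤
      p * (1 - p) * ∑ e ∈ s, bernoulliExp p s (fun G => discreteDeriv e F G ^ 2) := by
  induction s using Finset.induction_on generalizing F with
  | empty => simp [bernoulliExp_empty]
  | insert a s ha ih =>
    have hq : 0 ≤ 1 - p := sub_nonneg.2 hp.2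
    have h_without := mul_le_mul_of_nonneg_left (ih F) hq
    have h_with := mul_le_mul_of_nonneg_left (ih fun G => F (insert a G)) hp.1
    have h_new := mul_le_mul_of_nonneg_left (sq_bernoulliExp_insert_sub_le (F := F) hp ha)
      (mul_nonneg hp.1 hq)
    have h_old : ∑ e ∈ s, bernoulliExp p (insert a s) (fun G => discreteDeriv e F G ^ 2) =
        (1 - p) * ∑ e ∈ s, bernoulliExp p s (fun G => discreteDeriv e F G ^ 2) +
          p * ∑ e ∈ s, bernoulliExp p s
            (fun G => discreteDeriv e (fun G => F (insert a G)) G ^ 2) := by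
      rw [mul_sum, mul_sum, ← sum_add_distrib]
      refine sum_congr rfl fun e he => ?_
      rw [bernoulliExp_insert p ha]
      simp only [discreteDeriv_insert_of_ne (ne_of_mem_of_not_mem he ha)]
    rw [sum_insert ha, h_old, bernoulliExp_insert p ha, bernoulliExp_insert p ha]
    linear_combination h_without + h_with + h_new

end EfronStein

lemma bernoulliExp_exp_le_of_abs_le {C : ℝ} (hp : p ∈ Set.Icc 0 1) (hC : C ≤ 1)
    (hF : ∀ G ⊆ s, |F G| ≤ C) (h_mean : bernoulliExp p s F = 0) :
    bernoulliExp p s (fun G => Real.exp (F G)) ≤ Real.exp (C ^ 2) := by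
  have h_quad : bernoulliExp p s (fun G => Real.exp (F G)) ≤
      bernoulliExp p s (fun G => (C ^ 2 + 1) + F G) := by
    refine bernoulliExp_mono hp fun G hG => ?_
    have h_taylor := abs_le.1 (Real.abs_exp_sub_one_sub_id_le ((hF G hG).trans hC))
    have h_sq : F G ^ 2 ≤ C ^ 2 := sq_le_sq.2 ((hF G hG).trans (le_abs_self C))
    linarith
  rw [bernoulliExp_add, bernoulliExp_const, h_mean, add_zero] at h_quad
  exact h_quad.trans (Real.add_one_le_exp _)

lemma sq_exp_sub_exp_le {x y : ℝ} (h : |x - y| ≤ 1) :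
    (Real.exp x - Real.exp y) ^ 2 ≤ 4 * (x - y) ^ 2 * Real.exp (2 * x) := by
  have h_sq : (Real.exp (y - x) - 1) ^ 2 ≤ (2 * |y - x|) ^ 2 :=
    sq_le_sq.2 ((Real.abs_exp_sub_one_le (by rwa [abs_sub_comm])).trans (le_abs_self _))
  rw [mul_pow, sq_abs] at h_sq
  calc (Real.exp x - Real.exp y) ^ 2
      = (Real.exp (y - x) - 1) ^ 2 * Real.exp (2 * x) := by
        rw [show (2 : ℝ) * x = x + x by ring, Real.exp_add, Real.exp_sub]
        field_simp
        ring
    _ ≤ 2 ^ 2 * (y - x) ^ 2 * Real.exp (2 * x) := by gcongr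
    _ = 4 * (x - y) ^ 2 * Real.exp (2 * x) := by ring

section Concentration

variable [DecidableEq α]

lemma sq_discreteDeriv_exp_half_le {e : α} {G : Finset α} (h : discreteDeriv e F G ^ 2 ≤ 1) :
    discreteDeriv e (fun G => Real.exp (F G / 2)) G ^ 2 ≤
      discreteDeriv e F G ^ 2 * Real.exp (F G) := by
  have h_abs : |F (insert e G) / 2 - F (G.erase e) / 2| ≤ 1 := by
    have := (sq_le_one_iff_abs_le_one _).1 h
    rw [← sub_div, abs_div, abs_two]
    exact (div_le_self (abs_nonneg _) one_le_two).trans this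
  rcases em (e ∈ G) with he | he
  · refine (sq_exp_sub_exp_le h_abs).trans_eq ?_
    rw [discreteDeriv, insert_eq_of_mem he]
    ring_nf
  · rw [abs_sub_comm] at h_abs
    simp only [discreteDeriv, erase_eq_of_notMem he] at h_abs ⊢
    rw [sub_sq_comm]
    refine (sq_exp_sub_exp_le h_abs).trans_eq ?_
    ring_nf

/-- The Efron–Stein inequality for `exp (F / 2)`. -/
lemma bernoulliExp_exp_le_mul_sq (hp : p ∈ Set.Icc 0 1) (hV1 : V ≤ 1)
    (hV : ∀ G ⊆ s, ∑ e ∈ s, discreteDeriv e F G ^ 2 ≤ V) :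
    bernoulliExp p s (fun G => Real.exp (F G)) ≤
      Real.exp (V / 2) * bernoulliExp p s (fun G => Real.exp (F G / 2)) ^ 2 := by
  set L := bernoulliExp p s (fun G => Real.exp (F G)) with hL
  have hL0 : 0 ≤ L := bernoulliExp_nonneg hp fun _ _ => (Real.exp_pos _).le
  have hV0 : 0 ≤ V := (sum_nonneg fun _ _ => sq_nonneg _).trans (hV ∅ (empty_subset s))
  have h_grad : bernoulliExp p s
      (fun G => ∑ e ∈ s, discreteDeriv e (fun G => Real.exp (F G / 2)) G ^ 2) ≤ V * L := by
    rw [hL, ← bernoulliExp_const_mul]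
    refine bernoulliExp_mono hp fun G hG => ?_
    have h_one (e : α) (he : e ∈ s) : discreteDeriv e F G ^ 2 ≤ 1 :=
      (single_le_sum (f := fun e => discreteDeriv e F G ^ 2) (fun _ _ => sq_nonneg _) he).trans
        ((hV G hG).trans hV1)
    refine (sum_le_sum fun e he => sq_discreteDeriv_exp_half_le (h_one e he)).trans ?_
    rw [← sum_mul]
    exact mul_le_mul_of_nonneg_right (hV G hG) (Real.exp_pos _).le
  have h_es := bernoulli_efron_stein hp s (fun G => Real.exp (F G / 2))
  have h_sq (G : Finset α) : Real.exp (F G / 2) ^ 2 = Real.exp (F G) := by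
    rw [← Real.exp_nat_mul]; congr 1; push_cast; ring
  simp only [h_sq] at h_es
  rw [← bernoulliExp_sum, ← hL] at h_es
  have hpq : p * (1 - p) ≤ 1 / 4 := by linarith [sq_nonneg (p - 1 / 2)]
  have h_improve : L * (1 - V / 4) ≤ bernoulliExp p s (fun G => Real.exp (F G / 2)) ^ 2 := by
    have := mul_le_mul hpq h_grad
      (bernoulliExp_nonneg hp fun G _ => sum_nonneg fun _ _ => sq_nonneg _) (by norm_num)
    linarith
  have h_exp : 1 ≤ Real.exp (V / 2) * (1 - V / 4) := by
    nlinarith [Real.add_one_le_exp (V / 2)]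
  calc L ≤ Real.exp (V / 2) * (1 - V / 4) * L := le_mul_of_one_le_left hL0 h_exp
    _ = Real.exp (V / 2) * (L * (1 - V / 4)) := by ring
    _ ≤ _ := by gcongr

lemma bernoulliExp_exp_le_mul_pow_two_pow (hp : p ∈ Set.Icc 0 1) (hV1 : V ≤ 1)
    (hV : ∀ G ⊆ s, ∑ e ∈ s, discreteDeriv e F G ^ 2 ≤ V) (j : ℕ) :
    bernoulliExp p s (fun G => Real.exp (F G)) ≤
      Real.exp V * bernoulliExp p s (fun G => Real.exp (F G / 2 ^ j)) ^ 2 ^ j := by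
  induction j generalizing F V with
  | zero =>
    have hV0 : 0 ≤ V := (sum_nonneg fun _ _ => sq_nonneg _).trans (hV ∅ (empty_subset s))
    simpa using le_mul_of_one_le_left (bernoulliExp_nonneg hp fun _ _ => (Real.exp_pos _).le)
      (Real.one_le_exp hV0)
  | succ j ih =>
    have h_half : ∀ G ⊆ s, ∑ e ∈ s, discreteDeriv e (fun G => F G / 2) G ^ 2 ≤ V / 4 := by
      intro G hG
      simp only [discreteDeriv, ← sub_div, div_pow]
      rw [← sum_div]
      simpa only [discreteDeriv, show (2 : ℝ) ^ 2 = 4 by norm_num] using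
        div_le_div_of_nonneg_right (hV G hG) (by norm_num : (0 : ℝ) ≤ 4)
    have h_next := ih (by linarith) h_half
    set L := bernoulliExp p s (fun G => Real.exp (F G / 2 / 2 ^ j))
    calc bernoulliExp p s (fun G => Real.exp (F G))
        ≤ Real.exp (V / 2) * bernoulliExp p s (fun G => Real.exp (F G / 2)) ^ 2 :=
          bernoulliExp_exp_le_mul_sq hp hV1 hV
      _ ≤ Real.exp (V / 2) * (Real.exp (V / 4) * L ^ 2 ^ j) ^ 2 := by
          gcongr
          exact bernoulliExp_nonneg hp fun _ _ => (Real.exp_pos _).le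
      _ = Real.exp V * L ^ 2 ^ (j + 1) := by
          rw [mul_pow, ← mul_assoc, ← Real.exp_nat_mul, ← Real.exp_add, ← pow_mul, ← pow_succ]
          congr 2
          push_cast
          ring
      _ = _ := by simp only [L, ← pow_succ', div_div]

/-- Iterate `bernoulliExp_exp_le_mul_sq`: the factors `exp (V / 2), exp (V / 4), …` multiply up to
`exp V`, while the Laplace transform of `F / 2 ^ j` is `1 + O(4 ^ (-j))`. -/
lemma bernoulliExp_exp_le_of_mean_zero (hp : p ∈ Set.Icc 0 1) (hV1 : V ≤ 1)
    (hV : ∀ G ⊆ s, ∑ e ∈ s, discreteDeriv e F G ^ 2 ≤ V) (h_mean : bernoulliExp p s F = 0) :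
    bernoulliExp p s (fun G => Real.exp (F G)) ≤ Real.exp V := by
  set C := ∑ G ∈ s.powerset, |F G|
  have hC : ∀ G ⊆ s, |F G| ≤ C := fun G hG =>
    single_le_sum (f := fun G => |F G|) (fun _ _ => abs_nonneg _) (mem_powerset.2 hG)
  have h_bound (j : ℕ) (hj : C ≤ 2 ^ j) :
      bernoulliExp p s (fun G => Real.exp (F G)) ≤ Real.exp (V + C ^ 2 / 2 ^ j) := by
    have h_small : bernoulliExp p s (fun G => Real.exp (F G / 2 ^ j)) ≤
        Real.exp ((C / 2 ^ j) ^ 2) := by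
      refine bernoulliExp_exp_le_of_abs_le hp (div_le_one_of_le₀ hj (by positivity)) ?_ ?_
      · intro G hG
        rw [abs_div, abs_of_pos (by positivity : (0 : ℝ) < 2 ^ j)]
        gcongr
        exact hC G hG
      · simp only [div_eq_inv_mul, bernoulliExp_const_mul, h_mean, mul_zero]
    refine (bernoulliExp_exp_le_mul_pow_two_pow hp hV1 hV j).trans ?_
    rw [Real.exp_add]
    gcongr
    refine (pow_le_pow_left₀ (bernoulliExp_nonneg hp fun _ _ => (Real.exp_pos _).le) h_small
      _).trans_eq ?_
    rw [← Real.exp_nat_mul]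
    congr 1
    push_cast
    field_simp
  have h_pow : Filter.Tendsto (fun j : ℕ => (2 : ℝ) ^ j) Filter.atTop Filter.atTop :=
    tendsto_pow_atTop_atTop_of_one_lt one_lt_two
  have h_lim : Filter.Tendsto (fun j : ℕ => Real.exp (V + C ^ 2 / 2 ^ j)) Filter.atTop
      (nhds (Real.exp (V + 0))) :=
    (Real.continuous_exp.tendsto _).comp ((h_pow.const_div_atTop _).const_add V)
  rw [add_zero] at h_lim
  exact ge_of_tendsto h_lim ((h_pow.eventually_ge_atTop C).mono h_bound)

lemma bernoulliPr_le_sub_bernoulliExp_le (hp : p ∈ Set.Icc 0 1) (hV0 : 0 < V)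
    (hV : ∀ G ⊆ s, ∑ e ∈ s, discreteDeriv e F G ^ 2 ≤ V) (x : ℝ) :
    bernoulliPr p s (fun G => x * √V ≤ F G - bernoulliExp p s F) ≤ Real.exp (1 - x) := by
  set m := bernoulliExp p s F with hm
  have hs : 0 < √V := Real.sqrt_pos.2 hV0
  have h_grad : ∀ G ⊆ s, ∑ e ∈ s, discreteDeriv e (fun G => (√V)⁻¹ * (F G - m)) G ^ 2 ≤ 1 := by
    intro G hG
    have h_scale (e : α) : discreteDeriv e (fun G => (√V)⁻¹ * (F G - m)) G =
        (√V)⁻¹ * discreteDeriv e F G := by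
      simp only [discreteDeriv]; ring
    simp only [h_scale, mul_pow, inv_pow, Real.sq_sqrt hV0.le]
    rw [← mul_sum, inv_mul_le_one₀ hV0]
    exact hV G hG
  have h_laplace := bernoulliExp_exp_le_of_mean_zero hp le_rfl h_grad (by
    rw [bernoulliExp_const_mul, bernoulliExp_sub, bernoulliExp_const, ← hm, sub_self, mul_zero])
  calc bernoulliPr p s (fun G => x * √V ≤ F G - m)
      ≤ bernoulliPr p s (fun G => x ≤ (√V)⁻¹ * (F G - m)) :=
        bernoulliPr_mono hp fun G _ hG => (le_inv_mul_iff₀' hs).2 hG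
    _ ≤ Real.exp (-x) * Real.exp 1 := (bernoulliPr_le_exp_neg_mul hp x).trans (by gcongr)
    _ = Real.exp (1 - x) := by rw [← Real.exp_add, neg_add_eq_sub]

lemma bernoulliPr_le_abs_sub_bernoulliExp_le (hp : p ∈ Set.Icc 0 1) (hV0 : 0 < V)
    (hV : ∀ G ⊆ s, ∑ e ∈ s, discreteDeriv e F G ^ 2 ≤ V) (x : ℝ) :
    bernoulliPr p s (fun G => x * √V ≤ |F G - bernoulliExp p s F|) ≤ 2 * Real.exp (1 - x) := by
  have h_upper := bernoulliPr_le_sub_bernoulliExp_le hp hV0 hV x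
  have h_lower := bernoulliPr_le_sub_bernoulliExp_le (F := fun G => -1 * F G) hp hV0
    (fun G hG => by
      refine le_of_eq_of_le (sum_congr rfl fun e _ => ?_) (hV G hG)
      simp only [discreteDeriv]; ring) x
  rw [bernoulliExp_const_mul] at h_lower
  rw [two_mul]
  refine (bernoulliPr_mono hp fun G _ hG => ?_).trans
    ((bernoulliPr_or_le hp _ _).trans (add_le_add h_upper h_lower))
  exact (le_abs.1 hG).imp_right fun h => h.trans_eq (by ring)

end Concentration

end Bernoulli

/-! ### From Bernoulli random subsets to uniform subsets of fixed size -/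

section UniformSubsets

variable {α : Type*}

lemma Pru_eq_expect (Ω : Finset α) (P : α → Prop) :
    Pru Ω P = 𝔼 a ∈ Ω, {a | P a}.indicator (1 : α → ℝ) a := by
  classical
  rw [Pru, expect_eq_sum_div_card, card_filter, Nat.cast_sum]
  congr 1
  exact sum_congr rfl fun a _ => by simp [Set.indicator_apply]

lemma factorial_mul_pow_le (a b : ℕ) : a.factorial * a ^ b ≤ b.factorial * a ^ a := by
  rcases le_total a b with hab | hba
  · calc a.factorial * a ^ b = a.factorial * a ^ (b - a) * a ^ a := by
          rw [mul_assoc, ← pow_add, Nat.sub_add_cancel hab]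
      _ ≤ b.factorial * a ^ a :=
          Nat.mul_le_mul_right _ (Nat.factorial_mul_pow_sub_le_factorial hab)
  · calc a.factorial * a ^ b = b.factorial * (a.descFactorial (a - b) * a ^ b) := by
          rw [← Nat.factorial_mul_descFactorial (Nat.sub_le a b), Nat.sub_sub_self hba, mul_assoc]
      _ ≤ b.factorial * (a ^ (a - b) * a ^ b) := by
          gcongr
          exact Nat.descFactorial_le_pow _ _
      _ = b.factorial * a ^ a := by rw [← pow_add, Nat.sub_add_cancel hba]

lemma choose_mul_pow_mul_pow_le {N M j : ℕ} (hM : M ≤ N) (hj : j ≤ N) :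
    N.choose j * (M ^ j * (N - M) ^ (N - j)) ≤ N.choose M * (M ^ M * (N - M) ^ (N - M)) := by
  have h_factorials := Nat.mul_le_mul (factorial_mul_pow_le M j)
    (factorial_mul_pow_le (N - M) (N - j))
  have hj_eq := Nat.choose_mul_factorial_mul_factorial hj
  have hM_eq := Nat.choose_mul_factorial_mul_factorial hM
  refine le_of_mul_le_mul_left ?_ (by positivity :
    0 < j.factorial * (N - j).factorial * (M.factorial * (N - M).factorial))
  calc j.factorial * (N - j).factorial * (M.factorial * (N - M).factorial) *
        (N.choose j * (M ^ j * (N - M) ^ (N - j)))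
      = N.choose j * j.factorial * (N - j).factorial *
          (M.factorial * M ^ j * ((N - M).factorial * (N - M) ^ (N - j))) := by ring
    _ ≤ N.choose M * M.factorial * (N - M).factorial *
          (j.factorial * M ^ M * ((N - j).factorial * (N - M) ^ (N - M))) := by
        rw [hj_eq, hM_eq]
        exact Nat.mul_le_mul_left _ h_factorials
    _ = _ := by ring

/-- The mode of the binomial distribution with `N` trials and mean `M` is `M`. -/
lemma choose_mul_pow_mul_pow_one_sub_le {N M j : ℕ} (hN : 0 < N) (hM : M ≤ N) (hj : j ≤ N) :
    (N.choose j : ℝ) * ((M / N : ℝ) ^ j * (1 - M / N : ℝ) ^ (N - j)) ≤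
      N.choose M * ((M / N : ℝ) ^ M * (1 - M / N : ℝ) ^ (N - M)) := by
  have hN' : (0 : ℝ) < N := Nat.cast_pos.2 hN
  have h_scale {i : ℕ} (hi : i ≤ N) : (M / N : ℝ) ^ i * (1 - M / N : ℝ) ^ (N - i) =
      ((M ^ i * (N - M) ^ (N - i) : ℕ) : ℝ) / N ^ N := by
    rw [one_sub_div hN'.ne', div_pow, div_pow, div_mul_div_comm, ← pow_add, Nat.add_sub_cancel' hi]
    push_cast [hM]
    rfl
  rw [h_scale hj, h_scale hM, ← mul_div_assoc, ← mul_div_assoc]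
  refine div_le_div_of_nonneg_right ?_ (by positivity)
  exact_mod_cast choose_mul_pow_mul_pow_le hM hj

lemma one_le_succ_mul_choose_mul_pow_mul_pow {N M : ℕ} (hN : 0 < N) (hM : M ≤ N) :
    1 ≤ (N + 1 : ℝ) * (N.choose M * ((M / N : ℝ) ^ M * (1 - M / N : ℝ) ^ (N - M))) := by
  calc (1 : ℝ) = (M / N + (1 - M / N)) ^ N := by rw [add_sub_cancel, one_pow]
    _ = ∑ j ∈ range (N + 1), (N.choose j : ℝ) * ((M / N : ℝ) ^ j * (1 - M / N : ℝ) ^ (N - j)) := by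
        rw [add_pow]
        exact sum_congr rfl fun j _ => mul_comm _ _
    _ ≤ #(range (N + 1)) • (N.choose M * ((M / N : ℝ) ^ M * (1 - M / N : ℝ) ^ (N - M))) :=
        sum_le_card_nsmul _ _ _ fun j hj =>
          choose_mul_pow_mul_pow_one_sub_le hN hM (Nat.lt_succ_iff.1 (mem_range.1 hj))
    _ = _ := by rw [card_range, nsmul_eq_mul, Nat.cast_add_one]

lemma Pru_powersetCard_le {s : Finset α} {M : ℕ} (hs : s.Nonempty) (hM : M ≤ #s)
    (P : Finset α → Prop) :
    Pru (s.powersetCard M) P ≤ (#s + 1) * bernoulliPr (M / #s) s P := by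
  have hp : (M / #s : ℝ) ∈ Set.Icc 0 1 :=
    ⟨by positivity, div_le_one_of_le₀ (Nat.cast_le.2 hM) (Nat.cast_nonneg _)⟩
  set ind : Finset α → ℝ := {G | P G}.indicator 1
  have h_ind : ∀ G, 0 ≤ ind G := Set.indicator_nonneg fun _ _ => zero_le_one
  set w : ℝ := (M / #s : ℝ) ^ M * (1 - M / #s : ℝ) ^ (#s - M) with hw
  have h_slice : w * ∑ G ∈ s.powersetCard M, ind G ≤ bernoulliPr (M / #s) s P := by
    calc w * ∑ G ∈ s.powersetCard M, ind G
        = ∑ G ∈ s.powersetCard M,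
            (M / #s : ℝ) ^ #G * (1 - M / #s : ℝ) ^ (#s - #G) * ind G := by
          rw [mul_sum]
          exact sum_congr rfl fun G hG => by rw [hw, (mem_powersetCard.1 hG).2]
      _ ≤ bernoulliPr (M / #s) s P :=
          sum_le_sum_of_subset_of_nonneg
            (fun G hG => mem_powerset.2 (mem_powersetCard.1 hG).1) fun G _ _ =>
            mul_nonneg (mul_nonneg (pow_nonneg hp.1 _) (pow_nonneg (sub_nonneg.2 hp.2) _)) (h_ind G)
  have h_mode := one_le_succ_mul_choose_mul_pow_mul_pow (card_pos.2 hs) hM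
  rw [← hw] at h_mode
  rw [Pru_eq_expect, expect_eq_sum_div_card, card_powersetCard,
    div_le_iff₀ (Nat.cast_pos.2 (Nat.choose_pos hM))]
  have h_sum : 0 ≤ ∑ G ∈ s.powersetCard M, ind G := sum_nonneg fun G _ => h_ind G
  calc ∑ G ∈ s.powersetCard M, ind G
      ≤ (#s + 1) * ((#s).choose M * w) * ∑ G ∈ s.powersetCard M, ind G :=
        le_mul_of_one_le_left h_sum h_mode
    _ = (#s + 1) * (w * ∑ G ∈ s.powersetCard M, ind G) * (#s).choose M := by ring
    _ ≤ _ := by gcongr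

end UniformSubsets

/-! ### The Lindeberg method -/

section Lindeberg

variable {α : Type*} {p : ℝ}

lemma abs_convexCombination_sub_le {A B C c d : ℝ} (hp : p ∈ Set.Icc 0 1) (hA : |A| ≤ c)
    (hB : |B| ≤ c) (hC : |C| ≤ d) : |(1 - p) * A + p * B - C| ≤ c + d := by
  have hq : 0 ≤ 1 - p := sub_nonneg.2 hp.2
  calc |(1 - p) * A + p * B - C| ≤ |(1 - p) * A| + |p * B| + |C| :=
        (abs_sub _ _).trans (add_le_add_left (abs_add_le _ _) _)
    _ = (1 - p) * |A| + p * |B| + |C| := by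
        rw [abs_mul, abs_mul, abs_of_nonneg hq, abs_of_nonneg hp.1]
    _ ≤ (1 - p) * c + p * c + d := by gcongr; exact hp.1
    _ = c + d := by ring

/-- Exchange of a single Bernoulli summand `β` for a normal one with the same mean and variance:
the first and second order terms of the Taylor expansions cancel. -/
lemma abs_stdNormalCdf_exchange_le {β : ℝ} (hp : p ∈ Set.Icc 0 1) (hβ : |β| ≤ 1) (a : ℝ) :
    |(1 - p) * Φ (a + p * β) + p * Φ (a - (1 - p) * β) - Φ (a / √(1 + p * (1 - p) * β ^ 2))| ≤
      2 * |β| ^ 3 := by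
  have hq : 0 ≤ 1 - p := sub_nonneg.2 hp.2
  have h_var : 0 ≤ p * (1 - p) * β ^ 2 := mul_nonneg (mul_nonneg hp.1 hq) (sq_nonneg β)
  have h_zero := abs_stdNormalCdf_sub_taylor_two_le a (a + p * β)
  have h_one := abs_stdNormalCdf_sub_taylor_two_le a (a - (1 - p) * β)
  have h_heat := abs_stdNormalCdf_div_sqrt_sub_taylor_le a (le_add_of_nonneg_right h_var)
  rw [add_sub_cancel_left] at h_zero h_heat
  rw [sub_sub_cancel_left] at h_one
  have h_zero_le : |p * β| ^ 3 ≤ |β| ^ 3 := by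
    rw [abs_mul, abs_of_nonneg hp.1]
    have := mul_le_of_le_one_left (abs_nonneg β) hp.2
    have := hp.1
    gcongr
  have h_one_le : |-((1 - p) * β)| ^ 3 ≤ |β| ^ 3 := by
    rw [abs_neg, abs_mul, abs_of_nonneg hq]
    have := mul_le_of_le_one_left (abs_nonneg β) (sub_le_self 1 hp.1)
    gcongr
  have h_heat_le : (p * (1 - p) * β ^ 2) ^ 2 ≤ |β| ^ 3 := by
    have hpq : p * (1 - p) ≤ 1 := mul_le_one₀ hp.2 hq (sub_le_self 1 hp.1)
    calc (p * (1 - p) * β ^ 2) ^ 2 ≤ (β ^ 2) ^ 2 :=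
          pow_le_pow_left₀ h_var (mul_le_of_le_one_left (sq_nonneg β) hpq) 2
      _ = |β| ^ 4 := by rw [← sq_abs β]; ring
      _ ≤ |β| ^ 3 := pow_le_pow_of_le_one (abs_nonneg β) hβ (by norm_num)
  convert abs_convexCombination_sub_le hp (h_zero.trans h_zero_le) (h_one.trans h_one_le)
    (h_heat.trans h_heat_le) using 2 <;> ring

lemma abs_stdNormalCdf_div_sqrt_exchange_le {b v : ℝ} (hp : p ∈ Set.Icc 0 1) (hv : 0 < v)
    (hb : |b| ≤ √v) (z : ℝ) :
    |(1 - p) * Φ (z / √v) + p * Φ ((z - b) / √v) -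
        Φ ((z - p * b) / √(v + p * (1 - p) * b ^ 2))| ≤ 2 * (|b| / √v) ^ 3 := by
  have hs : 0 < √v := Real.sqrt_pos.2 hv
  have h_abs : |b / √v| = |b| / √v := by rw [abs_div, abs_of_pos hs]
  have h := abs_stdNormalCdf_exchange_le (β := b / √v) hp
    (h_abs.trans_le (div_le_one_of_le₀ hb hs.le)) ((z - p * b) / √v)
  have h_var : v + p * (1 - p) * b ^ 2 = v * (1 + p * (1 - p) * (b / √v) ^ 2) := by
    rw [div_pow, Real.sq_sqrt hv.le]; field_simp
  rw [h_var, Real.sqrt_mul hv.le, ← div_div]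
  rw [h_abs] at h
  convert h using 6 <;> ring

/-- The **Lindeberg method**: the summands are absorbed one at a time into the variance. -/
lemma abs_bernoulliExp_stdNormalCdf_sub_le {v : ℝ} {b : α → ℝ} {s : Finset α}
    (hp : p ∈ Set.Icc 0 1) (hv : 0 < v) (hb : ∀ e ∈ s, |b e| ≤ √v) (z : ℝ) :
    |bernoulliExp p s (fun G => Φ ((z - ∑ e ∈ G, b e) / √v)) -
        Φ ((z - p * ∑ e ∈ s, b e) / √(v + p * (1 - p) * ∑ e ∈ s, b e ^ 2))| ≤
      2 * ∑ e ∈ s, (|b e| / √v) ^ 3 := by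
  classical
  induction s using Finset.induction_on generalizing z with
  | empty => simp [bernoulliExp_empty]
  | insert a s ha ih =>
    rw [forall_mem_insert] at hb
    have h_var : 0 ≤ p * (1 - p) * ∑ e ∈ s, b e ^ 2 :=
      mul_nonneg (mul_nonneg hp.1 (sub_nonneg.2 hp.2)) (sum_nonneg fun _ _ => sq_nonneg _)
    set v' := v + p * (1 - p) * ∑ e ∈ s, b e ^ 2 with hv'
    have h_sqrt : √v ≤ √v' := Real.sqrt_le_sqrt (by linarith)
    have h_exchange := abs_stdNormalCdf_div_sqrt_exchange_le hp (by linarith : 0 < v')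
      (hb.1.trans h_sqrt) (z - p * ∑ e ∈ s, b e)
    have h_exchange_le : 2 * (|b a| / √v') ^ 3 ≤ 2 * (|b a| / √v) ^ 3 := by
      have := Real.sqrt_pos.2 hv
      gcongr
    have h_with : bernoulliExp p s (fun G => Φ ((z - ∑ e ∈ insert a G, b e) / √v)) =
        bernoulliExp p s (fun G => Φ ((z - b a - ∑ e ∈ G, b e) / √v)) :=
      bernoulliExp_congr p fun G hG => by rw [sum_insert fun h => ha (hG h), sub_sub]
    rw [bernoulliExp_insert p ha, h_with, sum_insert ha, sum_insert ha, sum_insert ha,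
      show v + p * (1 - p) * (b a ^ 2 + ∑ e ∈ s, b e ^ 2) = v' + p * (1 - p) * b a ^ 2 by
        rw [hv']; ring,
      show z - p * (b a + ∑ e ∈ s, b e) = z - p * ∑ e ∈ s, b e - p * b a by ring,
      mul_add, add_comm (2 * (|b a| / √v) ^ 3)]
    convert abs_convexCombination_sub_le hp (ih hb.2 z) (ih hb.2 (z - b a))
      ((abs_sub_comm _ _).trans_le (h_exchange.trans h_exchange_le)) using 2
    rw [sub_right_comm z (b a)]
    ring

end Lindeberg

/-! ### Almost orthogonal families -/

section AlmostOrthogonality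

variable {ι α : Type*}

/-- Schur's test. -/
lemma sum_sum_mul_mul_le_of_sum_abs_le {E : Finset ι} {R : ι → ι → ℝ}
    (hR : ∀ i j, R i j = R j i) {Λ : ℝ} (hΛ : ∀ i ∈ E, ∑ j ∈ E, |R i j| ≤ Λ) (c : ι → ℝ) :
    ∑ i ∈ E, ∑ j ∈ E, c i * c j * R i j ≤ Λ * ∑ i ∈ E, c i ^ 2 := by
  have h_row : ∑ i ∈ E, ∑ j ∈ E, c i ^ 2 * |R i j| ≤ Λ * ∑ i ∈ E, c i ^ 2 := by
    rw [mul_sum]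
    refine sum_le_sum fun i hi => ?_
    rw [← mul_sum, mul_comm Λ]
    exact mul_le_mul_of_nonneg_left (hΛ i hi) (sq_nonneg _)
  have h_col : ∑ i ∈ E, ∑ j ∈ E, c j ^ 2 * |R i j| ≤ Λ * ∑ i ∈ E, c i ^ 2 := by
    rw [sum_comm]
    simpa only [hR] using h_row
  have h_term (i j : ι) : c i * c j * R i j ≤ (c i ^ 2 * |R i j| + c j ^ 2 * |R i j|) / 2 := by
    have h_abs : c i * c j * R i j ≤ |c i| * |c j| * |R i j| := by
      rw [← abs_mul, ← abs_mul]
      exact le_abs_self _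
    have h_amgm := two_mul_le_add_sq |c i| |c j|
    rw [sq_abs, sq_abs] at h_amgm
    linarith [mul_le_mul_of_nonneg_right h_amgm (abs_nonneg (R i j))]
  calc ∑ i ∈ E, ∑ j ∈ E, c i * c j * R i j
      ≤ ∑ i ∈ E, ∑ j ∈ E, (c i ^ 2 * |R i j| + c j ^ 2 * |R i j|) / 2 :=
        sum_le_sum fun i _ => sum_le_sum fun j _ => h_term i j
    _ = (∑ i ∈ E, ∑ j ∈ E, c i ^ 2 * |R i j| + ∑ i ∈ E, ∑ j ∈ E, c j ^ 2 * |R i j|) / 2 := by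
        simp only [← sum_div, sum_add_distrib]
    _ ≤ Λ * ∑ i ∈ E, c i ^ 2 := by linarith

/-- A Bessel inequality for families that are only almost orthogonal. -/
lemma sum_sq_expect_mul_le {Ω : Finset α} {E : Finset ι} {b : ι → α → ℝ} {Λ : ℝ} (hΛ0 : 0 ≤ Λ)
    (hΛ : ∀ i ∈ E, ∑ j ∈ E, |𝔼 a ∈ Ω, b i a * b j a| ≤ Λ) (g : α → ℝ) :
    ∑ i ∈ E, (𝔼 a ∈ Ω, b i a * g a) ^ 2 ≤ Λ * 𝔼 a ∈ Ω, g a ^ 2 := by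
  set c : ι → ℝ := fun i => 𝔼 a ∈ Ω, b i a * g a
  set Q : ℝ := ∑ i ∈ E, c i ^ 2 with hQ
  have h_pairing : 𝔼 a ∈ Ω, (∑ i ∈ E, c i * b i a) * g a = Q := by
    simp only [sum_mul, expect_sum_comm, mul_assoc, ← mul_expect, hQ, sq, c]
  have h_gram : 𝔼 a ∈ Ω, (∑ i ∈ E, c i * b i a) ^ 2 ≤ Λ * Q := by
    calc 𝔼 a ∈ Ω, (∑ i ∈ E, c i * b i a) ^ 2
        = ∑ i ∈ E, ∑ j ∈ E, c i * c j * 𝔼 a ∈ Ω, b i a * b j a := by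
          simp only [sq, sum_mul_sum, expect_sum_comm, mul_expect, mul_mul_mul_comm]
      _ ≤ Λ * Q := sum_sum_mul_mul_le_of_sum_abs_le
          (fun i j => expect_congr rfl fun a _ => mul_comm _ _) hΛ c
  have hg : 0 ≤ 𝔼 a ∈ Ω, g a ^ 2 := expect_nonneg fun a _ => sq_nonneg _
  have h_cauchy : Q ^ 2 ≤ Λ * Q * 𝔼 a ∈ Ω, g a ^ 2 := by
    rw [← h_pairing]
    exact (expect_mul_sq_le_sq_mul_sq _ _ _).trans
      (mul_le_mul_of_nonneg_right (h_pairing ▸ h_gram) hg)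
  have hQ_nonneg : 0 ≤ Q := sum_nonneg fun i _ => sq_nonneg (c i)
  rcases hQ_nonneg.eq_or_lt with hQ_zero | hQ_pos
  · exact hQ_zero.symm.trans_le (mul_nonneg hΛ0 hg)
  · exact le_of_mul_le_mul_left (by linarith) hQ_pos

end AlmostOrthogonality

/-! ### Smoothed distribution functions -/

section Smoothing

variable {ι α : Type*} {Ω : Finset α} {b : ι → α → ℝ} {v : ℝ}

/-- The distribution function at `z` of the sum `∑ e ∈ G, b e a`, for uniformly random `a ∈ Ω`,
convolved with the centred normal law of variance `v`. -/
def smoothedCdf (Ω : Finset α) (b : ι → α → ℝ) (v z : ℝ) (G : Finset ι) : ℝ :=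
  𝔼 a ∈ Ω, Φ ((z - ∑ e ∈ G, b e a) / √v)

lemma abs_expect_le_of_forall_abs_le (hΩ : Ω.Nonempty) {f : α → ℝ} {c : ℝ}
    (h : ∀ a ∈ Ω, |f a| ≤ c) : |𝔼 a ∈ Ω, f a| ≤ c :=
  (abs_expect_le _ _).trans (expect_le hΩ h)

lemma abs_stdNormalCdf_switch_sub_le [DecidableEq ι] (hv : 0 < v) (β : ι → ℝ) (z : ℝ) (e : ι)
    (G : Finset ι) :
    |discreteDeriv e (fun G => Φ ((z - ∑ i ∈ G, β i) / √v)) G -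
        β e * -(φ ((z - ∑ i ∈ G, β i) / √v) / √v)| ≤ β e ^ 2 / v := by
  have h_sq : |β e / √v| ^ 2 = β e ^ 2 / v := by rw [sq_abs, div_pow, Real.sq_sqrt hv.le]
  rw [discreteDeriv]
  set w := (z - ∑ i ∈ G, β i) / √v with hw
  by_cases he : e ∈ G
  · have h_erase : (z - ∑ i ∈ G.erase e, β i) / √v = w + β e / √v := by
      rw [hw, ← add_sum_erase G β he]
      ring
    have h := abs_stdNormalCdf_sub_taylor_one_le w (w + β e / √v)
    rw [add_sub_cancel_left, h_sq, ← abs_neg] at h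
    rw [insert_eq_of_mem he, h_erase]
    convert h using 2
    ring
  · have h_insert : (z - ∑ i ∈ insert e G, β i) / √v = w - β e / √v := by
      rw [hw, sum_insert he]
      ring
    have h := abs_stdNormalCdf_sub_taylor_one_le w (w - β e / √v)
    rw [sub_sub_cancel_left, abs_neg, h_sq] at h
    rw [erase_eq_of_notMem he, h_insert]
    convert h using 2
    ring

lemma abs_discreteDeriv_smoothedCdf_sub_le [DecidableEq ι] (hΩ : Ω.Nonempty) (hv : 0 < v) {e : ι}
    (hb : ∀ a ∈ Ω, |b e a| ≤ 1) (z : ℝ) (G : Finset ι) :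
    |discreteDeriv e (smoothedCdf Ω b v z) G -
        𝔼 a ∈ Ω, b e a * -(φ ((z - ∑ i ∈ G, b i a) / √v) / √v)| ≤ 1 / v := by
  rw [discreteDeriv, smoothedCdf, smoothedCdf, ← expect_sub_distrib, ← expect_sub_distrib]
  refine abs_expect_le_of_forall_abs_le hΩ fun a ha => ?_
  refine (abs_stdNormalCdf_switch_sub_le hv (fun i => b i a) z e G).trans ?_
  gcongr
  exact (sq_le_one_iff_abs_le_one _).2 (hb a ha)

/-- Up to second order terms, the discrete derivatives of a smoothed distribution function are the
correlations of a bounded function with the family `b`, so almost orthogonality of `b` makes the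
discrete gradient small. -/
lemma sum_sq_discreteDeriv_smoothedCdf_le [DecidableEq ι] {E : Finset ι} {Λ : ℝ} (hΩ : Ω.Nonempty)
    (hv : 0 < v) (hb : ∀ e ∈ E, ∀ a ∈ Ω, |b e a| ≤ 1) (hΛ0 : 0 ≤ Λ)
    (hΛ : ∀ e ∈ E, ∑ e' ∈ E, |𝔼 a ∈ Ω, b e a * b e' a| ≤ Λ) (z : ℝ) (G : Finset ι) :
    ∑ e ∈ E, discreteDeriv e (smoothedCdf Ω b v z) G ^ 2 ≤ 2 * Λ / v + 2 * #E / v ^ 2 := by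
  set g : α → ℝ := fun a => -(φ ((z - ∑ i ∈ G, b i a) / √v) / √v) with hg
  set c : ι → ℝ := fun e => 𝔼 a ∈ Ω, b e a * g a
  have hg_sq : 𝔼 a ∈ Ω, g a ^ 2 ≤ 1 / v := by
    refine expect_le hΩ fun a _ => ?_
    rw [hg, neg_sq, div_pow, Real.sq_sqrt hv.le]
    gcongr
    exact pow_le_one₀ (stdNormalPdf_nonneg _) (stdNormalPdf_le_one _)
  have h_bessel : ∑ e ∈ E, c e ^ 2 ≤ Λ * (1 / v) :=
    (sum_sq_expect_mul_le hΛ0 hΛ g).trans (mul_le_mul_of_nonneg_left hg_sq hΛ0)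
  have h_coord : ∀ e ∈ E,
      discreteDeriv e (smoothedCdf Ω b v z) G ^ 2 ≤ 2 * c e ^ 2 + 2 * (1 / v) ^ 2 := by
    intro e he
    have h_sq := sq_le_sq.2 ((abs_discreteDeriv_smoothedCdf_sub_le hΩ hv (hb e he) z G).trans
      (le_abs_self _))
    have h_split := add_sq_le (a := c e) (b := discreteDeriv e (smoothedCdf Ω b v z) G - c e)
    rw [add_sub_cancel] at h_split
    linarith
  calc ∑ e ∈ E, discreteDeriv e (smoothedCdf Ω b v z) G ^ 2
      ≤ ∑ e ∈ E, (2 * c e ^ 2 + 2 * (1 / v) ^ 2) := sum_le_sum h_coord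
    _ = 2 * ∑ e ∈ E, c e ^ 2 + 2 * #E / v ^ 2 := by
        rw [sum_add_distrib, ← mul_sum, sum_const, nsmul_eq_mul]
        ring
    _ ≤ 2 * (Λ * (1 / v)) + 2 * #E / v ^ 2 := by gcongr
    _ = 2 * Λ / v + 2 * #E / v ^ 2 := by ring

lemma bernoulliExp_smoothedCdf (p : ℝ) (s : Finset ι) (z : ℝ) :
    bernoulliExp p s (smoothedCdf Ω b v z) =
      𝔼 a ∈ Ω, bernoulliExp p s (fun G => Φ ((z - ∑ e ∈ G, b e a) / √v)) := by
  simp only [bernoulliExp, smoothedCdf, expect_sum_comm, mul_expect]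

lemma abs_bernoulliExp_smoothedCdf_sub_le {p : ℝ} {s : Finset ι} {V : ℝ} (hp : p ∈ Set.Icc 0 1)
    (hΩ : Ω.Nonempty) (hv : 1 ≤ v) (hb : ∀ e ∈ s, ∀ a ∈ Ω, |b e a| ≤ 1)
    (h_sum : ∀ a ∈ Ω, ∑ e ∈ s, b e a = 0) (h_sq : ∀ a ∈ Ω, ∑ e ∈ s, b e a ^ 2 = V) (z : ℝ) :
    |bernoulliExp p s (smoothedCdf Ω b v z) - Φ (z / √(v + p * (1 - p) * V))| ≤
      2 * #s / √v ^ 3 := by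
  have hs : 1 ≤ √v := Real.one_le_sqrt.2 hv
  rw [bernoulliExp_smoothedCdf, ← expect_const hΩ (Φ (z / √(v + p * (1 - p) * V))),
    ← expect_sub_distrib]
  refine abs_expect_le_of_forall_abs_le hΩ fun a ha => ?_
  have h := abs_bernoulliExp_stdNormalCdf_sub_le hp (by linarith : 0 < v)
    (fun e he => (hb e he a ha).trans hs) z
  rw [h_sum a ha, h_sq a ha, mul_zero, sub_zero] at h
  refine h.trans ?_
  rw [mul_div_assoc]
  gcongr
  calc ∑ e ∈ s, (|b e a| / √v) ^ 3 ≤ #s • (1 / √v ^ 3) :=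
        sum_le_card_nsmul _ _ _ fun e he => by
          rw [div_pow]
          gcongr
          exact pow_le_one₀ (abs_nonneg _) (hb e he a ha)
    _ = #s / √v ^ 3 := by rw [nsmul_eq_mul, mul_one_div]

end Smoothing

/-! ### Removal of the smoothing -/

section Desmoothing

variable {α : Type*} {Ω : Finset α}

lemma Pru_congr {P Q : α → Prop} (h : ∀ a ∈ Ω, P a ↔ Q a) : Pru Ω P = Pru Ω Q := by
  classical rw [Pru, Pru, filter_congr h]

lemma Pru_eq_zero {P : α → Prop} (h : ∀ a ∈ Ω, ¬ P a) : Pru Ω P = 0 := by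
  classical rw [Pru, filter_false_of_mem h, card_empty, Nat.cast_zero, zero_div]

lemma Pru_eq_one (hΩ : Ω.Nonempty) {P : α → Prop} (h : ∀ a ∈ Ω, P a) : Pru Ω P = 1 := by
  classical rw [Pru, filter_true_of_mem h, div_self (Nat.cast_ne_zero.2 hΩ.card_ne_zero)]

variable {r v : ℝ}

lemma Pru_le_expect_stdNormalCdf_add (hΩ : Ω.Nonempty) (hr : 0 ≤ r) (X : α → ℝ) (z : ℝ) :
    Pru Ω (fun a => X a ≤ z) ≤
      𝔼 a ∈ Ω, Φ ((z + r - X a) / √v) + Real.exp (-(r / √v) ^ 2 / 2) := by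
  rw [Pru_eq_expect, ← expect_const hΩ (Real.exp _), ← expect_add_distrib]
  refine expect_le_expect fun a _ => Set.indicator_apply_le' (fun ha => ?_) fun _ =>
    add_nonneg (stdNormalCdf_nonneg _) (Real.exp_pos _).le
  have h_le : r / √v ≤ (z + r - X a) / √v := by
    gcongr
    linarith [show X a ≤ z from ha]
  have h_tail := one_sub_stdNormalCdf_le (div_nonneg hr (Real.sqrt_nonneg v))
  rw [Pi.one_apply]
  linarith [monotone_stdNormalCdf h_le]

lemma expect_stdNormalCdf_le_Pru_add (hΩ : Ω.Nonempty) (hr : 0 ≤ r) (X : α → ℝ) (z : ℝ) :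
    𝔼 a ∈ Ω, Φ ((z - r - X a) / √v) ≤
      Pru Ω (fun a => X a ≤ z) + Real.exp (-(r / √v) ^ 2 / 2) := by
  rw [Pru_eq_expect, ← expect_const hΩ (Real.exp _), ← expect_add_distrib]
  refine expect_le_expect fun a _ => ?_
  by_cases ha : X a ≤ z
  · rw [Set.indicator_of_mem (s := {a | X a ≤ z}) ha, Pi.one_apply]
    linarith [stdNormalCdf_le_one ((z - r - X a) / √v), Real.exp_pos (-(r / √v) ^ 2 / 2)]
  · have h_le : (z - r - X a) / √v ≤ -(r / √v) := by
      rw [← neg_div]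
      gcongr
      linarith
    rw [Set.indicator_of_notMem (s := {a | X a ≤ z}) ha, zero_add]
    exact (monotone_stdNormalCdf h_le).trans
      (stdNormalCdf_neg_le (div_nonneg hr (Real.sqrt_nonneg v)))

lemma abs_Pru_sub_le_of_abs_expect_stdNormalCdf_sub_le {X : α → ℝ} {F : ℝ → ℝ} {L t z : ℝ}
    (hΩ : Ω.Nonempty) (hr : 0 ≤ r) (hF : ∀ x y, |F y - F x| ≤ L * |y - x|)
    (h : ∀ y ∈ ({z - r, z + r} : Set ℝ), |𝔼 a ∈ Ω, Φ ((y - X a) / √v) - F y| ≤ t) :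
    |Pru Ω (fun a => X a ≤ z) - F z| ≤ t + L * r + Real.exp (-(r / √v) ^ 2 / 2) := by
  have h_upper := Pru_le_expect_stdNormalCdf_add (v := v) hΩ hr X z
  have h_lower := expect_stdNormalCdf_le_Pru_add (v := v) hΩ hr X z
  have h_minus := abs_le.1 (h (z - r) (Set.mem_insert _ _))
  have h_plus := abs_le.1 (h (z + r) (Set.mem_insert_of_mem _ rfl))
  have hF_minus := hF z (z - r)
  have hF_plus := hF z (z + r)
  rw [sub_sub_cancel_left, abs_neg, abs_of_nonneg hr] at hF_minus
  rw [add_sub_cancel_left, abs_of_nonneg hr] at hF_plus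
  rw [abs_le] at hF_minus hF_plus ⊢
  constructor <;> linarith

lemma abs_Pru_natCast_le_sub_le {X : α → ℕ} {M : ℕ} {F : ℝ → ℝ} {L t : ℝ} (hΩ : Ω.Nonempty)
    (hX : ∀ a ∈ Ω, X a ≤ M) (hF_mono : Monotone F) (hF_mem : ∀ x, F x ∈ Set.Icc 0 1)
    (hL : 0 ≤ L) (hF : ∀ x y, |F y - F x| ≤ L * |y - x|)
    (h : ∀ j ∈ Icc (-1 : ℤ) M, |Pru Ω (fun a => (X a : ℝ) ≤ j) - F j| ≤ t) (z : ℝ) :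
    |Pru Ω (fun a => (X a : ℝ) ≤ z) - F z| ≤ t + L := by
  rcases lt_or_ge z (-1) with hz | hz
  · have h_neg {y : ℝ} (hy : y < 0) : Pru Ω (fun a => (X a : ℝ) ≤ y) = 0 :=
      Pru_eq_zero fun a _ => (hy.trans_le (Nat.cast_nonneg _)).not_ge
    have h_end := h (-1) (by simp)
    rw [Int.cast_neg, Int.cast_one, h_neg (by norm_num), zero_sub, abs_neg] at h_end
    rw [h_neg (by linarith), zero_sub, abs_neg, abs_of_nonneg (hF_mem z).1]
    linarith [hF_mono hz.le, le_abs_self (F (-1))]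
  rcases le_or_gt (M : ℝ) z with hzM | hzM
  · have h_one {y : ℝ} (hy : M ≤ y) : Pru Ω (fun a => (X a : ℝ) ≤ y) = 1 :=
      Pru_eq_one hΩ fun a ha => (Nat.cast_le.2 (hX a ha)).trans hy
    have h_end := h M (by simp)
    rw [Int.cast_natCast, h_one le_rfl] at h_end
    rw [h_one hzM, abs_of_nonneg (sub_nonneg.2 (hF_mem z).2)]
    linarith [hF_mono hzM, le_abs_self (1 - F M)]
  · have h_mem : ⌊z⌋ ∈ Icc (-1 : ℤ) M :=
      mem_Icc.2 ⟨Int.le_floor.2 (by exact_mod_cast hz), Int.floor_le_iff.2 (by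
        push_cast
        linarith)⟩
    have h_floor : Pru Ω (fun a => (X a : ℝ) ≤ z) = Pru Ω (fun a => (X a : ℝ) ≤ ⌊z⌋) :=
      Pru_congr fun a _ => by
        rw [← Int.cast_natCast, ← Int.le_floor, Int.cast_le]
    have h_lip : |F ⌊z⌋ - F z| ≤ L * 1 := (hF _ _).trans <| by
      gcongr
      rw [abs_le]
      constructor <;> linarith [Int.floor_le z, Int.lt_floor_add_one z]
    rw [h_floor]
    linarith [abs_sub_le (Pru Ω fun a => (X a : ℝ) ≤ ⌊z⌋) (F ⌊z⌋) (F z), h _ h_mem]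

end Desmoothing

/-! ### Edge indicators of a random vertex set -/

lemma sum_abs_le_two_mul_sum_abs_filter {ι : Type*} {E : Finset ι} {R : ι → ℝ} (P : ι → Prop)
    [DecidablePred P] (h_sum : ∑ i ∈ E, R i = 0)
    (h_const : ∀ i ∈ E, ∀ j ∈ E, ¬ P i → ¬ P j → R i = R j) :
    ∑ i ∈ E, |R i| ≤ 2 * ∑ i ∈ E with P i, |R i| := by
  have h_abs : ∑ i ∈ E with ¬ P i, |R i| = |∑ i ∈ E with ¬ P i, R i| := by
    rcases (E.filter (¬ P ·)).eq_empty_or_nonempty with h_empty | ⟨j, hj⟩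
    · rw [h_empty, sum_empty, sum_empty, abs_zero]
    · have h_eq : ∀ i ∈ E.filter (¬ P ·), R i = R j := fun i hi =>
        h_const i (mem_filter.1 hi).1 j (mem_filter.1 hj).1 (mem_filter.1 hi).2 (mem_filter.1 hj).2
      rw [sum_congr rfl h_eq, sum_congr rfl fun i hi => congrArg _ (h_eq i hi), sum_const,
        sum_const, abs_nsmul]
  rw [← sum_filter_add_sum_filter_not E P] at h_sum
  rw [← sum_filter_add_sum_filter_not E P, h_abs, eq_neg_of_add_eq_zero_right h_sum, abs_neg,
    two_mul]
  gcongr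
  exact abs_sum_le_sum_abs _ _

lemma card_filter_powersetCard_subset_congr {α : Type*} [DecidableEq α] {s T T' : Finset α}
    (hT : T ⊆ s) (hT' : T' ⊆ s) (h : #T = #T') (k : ℕ) :
    #{S ∈ s.powersetCard k | T ⊆ S} = #{S ∈ s.powersetCard k | T' ⊆ S} := by
  rcases le_or_gt #T k with hk | hk
  · rw [card_filter_powersetCard_subset T s k hT hk,
      card_filter_powersetCard_subset T' s k hT' (h ▸ hk), h]
  · have h_empty {U : Finset α} (hU : k < #U) : {S ∈ s.powersetCard k | U ⊆ S} = ∅ :=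
      filter_false_of_mem fun S hS hUS =>
        hU.not_ge ((card_le_card hUS).trans_eq (mem_powersetCard.1 hS).2)
    rw [h_empty hk, h_empty (h ▸ hk)]

section Edges

variable {n k : ℕ}

/-- The indicator that both endpoints of `e` lie in `S`, centred by the probability `K / N` of this
event for a random `k`-set `S`. -/
def centredEdgeInd (k : ℕ) (e : Sym2 (Fin n)) (S : Finset (Fin n)) : ℝ :=
  (if e.toFinset ⊆ S then 1 else 0) - Kr k / Nr n

lemma mem_completeEdges {e : Sym2 (Fin n)} : e ∈ completeEdges n ↔ ¬ e.IsDiag := by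
  simp [completeEdges]

lemma graphsM_eq_powersetCard (n M : ℕ) : graphsM n M = (completeEdges n).powersetCard M := by
  ext G
  simp [graphsM, mem_powersetCard]

lemma kSets_nonempty (hk : k ≤ n) : (kSets n k).Nonempty := by
  rwa [kSets, powersetCard_nonempty, card_univ, Fintype.card_fin]

lemma Kr_eq_choose (k : ℕ) : Kr k = k.choose 2 :=
  (Nat.cast_choose_two ℝ k).symm

lemma Kr_nonneg (k : ℕ) : 0 ≤ Kr k := by
  rw [Kr_eq_choose]
  positivity

lemma Nr_pos (hn : 2 ≤ n) : 0 < Nr n := by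
  change 0 < Kr n
  rw [Kr_eq_choose, Nat.cast_pos]
  exact Nat.choose_pos hn

lemma Kr_div_Nr_mem_Icc (hk : k ≤ n) : Kr k / Nr n ∈ Set.Icc (0 : ℝ) 1 := by
  refine ⟨div_nonneg (Kr_nonneg k) (Kr_nonneg n), div_le_one_of_le₀ ?_ (Kr_nonneg n)⟩
  change Kr k ≤ Kr n
  rw [Kr_eq_choose, Kr_eq_choose]
  exact_mod_cast Nat.choose_le_choose 2 hk

lemma div_Nr_mem_Icc {M : ℕ} (hM : M ≤ Nr n) : M / Nr n ∈ Set.Icc (0 : ℝ) 1 :=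
  ⟨div_nonneg (Nat.cast_nonneg M) (Kr_nonneg n), div_le_one_of_le₀ hM (Kr_nonneg n)⟩

lemma edgesIn_eq_sum (G : Finset (Sym2 (Fin n))) (S : Finset (Fin n)) :
    (edgesIn G S : ℝ) = ∑ e ∈ G, if e.toFinset ⊆ S then 1 else 0 := by
  simp [edgesIn, subset_iff]

lemma edgesIn_completeEdges (S : Finset (Fin n)) : (edgesIn (completeEdges n) S : ℝ) = Kr #S := by
  classical
  have h_image : (completeEdges n).filter (fun e => ∀ v ∈ e, v ∈ S) =
      S.offDiag.image Sym2.mk.uncurry := by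
    ext e
    induction e with | _ a b
    simp only [mem_filter, mem_completeEdges, Sym2.mk_isDiag_iff, Sym2.mem_iff, mem_image,
      mem_offDiag, Prod.exists, Function.uncurry_apply_pair, Sym2.eq_iff]
    constructor
    · rintro ⟨hab, h⟩
      exact ⟨a, b, ⟨h a (Or.inl rfl), h b (Or.inr rfl), hab⟩, Or.inl ⟨rfl, rfl⟩⟩
    · rintro ⟨c, d, ⟨hc, hd, hcd⟩, ⟨rfl, rfl⟩ | ⟨rfl, rfl⟩⟩
      · exact ⟨hcd, by rintro x (rfl | rfl) <;> assumption⟩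
      · exact ⟨fun h => hcd h.symm, by rintro x (rfl | rfl) <;> assumption⟩
  rw [Kr_eq_choose, ← Sym2.card_image_offDiag, ← h_image, edgesIn]

lemma card_completeEdges (n : ℕ) : (#(completeEdges n) : ℝ) = Nr n := by
  have h := edgesIn_completeEdges (univ : Finset (Fin n))
  rwa [edgesIn, filter_true_of_mem fun _ _ _ _ => mem_univ _, card_univ, Fintype.card_fin] at h

lemma sum_centredEdgeInd (k : ℕ) (G : Finset (Sym2 (Fin n))) (S : Finset (Fin n)) :
    ∑ e ∈ G, centredEdgeInd k e S = edgesIn G S - muP n #G k := by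
  simp only [centredEdgeInd, sum_sub_distrib, ← edgesIn_eq_sum, sum_const, nsmul_eq_mul, muP]
  ring

lemma sum_completeEdges_centredEdgeInd (hn : 2 ≤ n) {S : Finset (Fin n)} (hS : S ∈ kSets n k) :
    ∑ e ∈ completeEdges n, centredEdgeInd k e S = 0 := by
  rw [sum_centredEdgeInd, edgesIn_completeEdges, muP, card_completeEdges,
    (mem_powersetCard.1 hS).2, mul_div_cancel_right₀ _ (Nr_pos hn).ne', sub_self]

lemma sum_completeEdges_centredEdgeInd_sq (hn : 2 ≤ n) {S : Finset (Fin n)} (hS : S ∈ kSets n k) :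
    ∑ e ∈ completeEdges n, centredEdgeInd k e S ^ 2 = Kr k * (1 - Kr k / Nr n) := by
  have h_sq (e : Sym2 (Fin n)) : centredEdgeInd k e S ^ 2 =
      (1 - 2 * (Kr k / Nr n)) * centredEdgeInd k e S + Kr k / Nr n * (1 - Kr k / Nr n) := by
    unfold centredEdgeInd
    split_ifs <;> ring
  simp only [h_sq, sum_add_distrib, ← mul_sum, sum_completeEdges_centredEdgeInd hn hS, sum_const,
    nsmul_eq_mul, card_completeEdges, mul_zero, zero_add]
  rw [← mul_assoc, div_mul_cancel₀ _ (Nr_pos hn).ne']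

lemma abs_centredEdgeInd_le_one (hk : k ≤ n) (e : Sym2 (Fin n)) (S : Finset (Fin n)) :
    |centredEdgeInd k e S| ≤ 1 := by
  obtain ⟨h_nonneg, h_le⟩ := Kr_div_Nr_mem_Icc hk
  rw [centredEdgeInd, abs_le]
  split_ifs <;> constructor <;> linarith

lemma expect_centredEdgeInd_mul_congr {e e₁ e₂ : Sym2 (Fin n)} (h : #e₁.toFinset = #e₂.toFinset)
    (h_union : #(e.toFinset ∪ e₁.toFinset) = #(e.toFinset ∪ e₂.toFinset)) :
    𝔼 S ∈ kSets n k, centredEdgeInd k e S * centredEdgeInd k e₁ S =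
      𝔼 S ∈ kSets n k, centredEdgeInd k e S * centredEdgeInd k e₂ S := by
  have h_prob {T T' : Finset (Fin n)} (hT : #T = #T') :
      𝔼 S ∈ kSets n k, (if T ⊆ S then 1 else 0 : ℝ) = 𝔼 S ∈ kSets n k, if T' ⊆ S then 1 else 0 := by
    simp only [expect_eq_sum_div_card, sum_boole, kSets,
      card_filter_powersetCard_subset_congr (subset_univ T) (subset_univ T') hT]
  have h_expand (e' : Sym2 (Fin n)) :
      𝔼 S ∈ kSets n k, centredEdgeInd k e S * centredEdgeInd k e' S =
        𝔼 S ∈ kSets n k, (if e.toFinset ∪ e'.toFinset ⊆ S then 1 else 0) -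
        Kr k / Nr n * 𝔼 S ∈ kSets n k, centredEdgeInd k e S -
        Kr k / Nr n * 𝔼 S ∈ kSets n k, if e'.toFinset ⊆ S then 1 else 0 := by
    simp only [mul_expect, ← expect_sub_distrib]
    refine expect_congr rfl fun S _ => ?_
    simp only [centredEdgeInd, union_subset_iff, ite_and]
    split_ifs <;> ring
  rw [h_expand, h_expand, h_prob h, h_prob h_union]

lemma card_filter_not_disjoint_toFinset_le (e : Sym2 (Fin n)) :
    #{e' ∈ completeEdges n | ¬ Disjoint e.toFinset e'.toFinset} ≤ 2 * n := by
  induction e with | _ a b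
  have h_image (c : Fin n) : #(univ.image fun x => s(c, x)) ≤ n :=
    card_image_le.trans_eq (card_fin n)
  have h_subset : {e' ∈ completeEdges n | ¬ Disjoint s(a, b).toFinset e'.toFinset} ⊆
      univ.image (fun x => s(a, x)) ∪ univ.image (fun x => s(b, x)) := by
    intro e' he'
    obtain ⟨v, hv, hv'⟩ := not_disjoint_iff.1 (mem_filter.1 he').2
    rw [Sym2.mem_toFinset] at hv hv'
    obtain ⟨w, rfl⟩ := hv'
    rcases Sym2.mem_iff.1 hv with rfl | rfl
    · exact mem_union_left _ (mem_image_of_mem _ (mem_univ _))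
    · exact mem_union_right _ (mem_image_of_mem _ (mem_univ _))
  linarith [(card_le_card h_subset).trans (card_union_le _ _), h_image a, h_image b]

/-- The edges disjoint from `e` all have the same covariance with `e`, and the signed row sum
vanishes, so their total absolute contribution is at most that of the `O(n)` edges meeting `e`. -/
lemma sum_abs_expect_centredEdgeInd_mul_le (hn : 2 ≤ n) (hk : k ≤ n) (e : Sym2 (Fin n)) :
    ∑ e' ∈ completeEdges n, |𝔼 S ∈ kSets n k, centredEdgeInd k e S * centredEdgeInd k e' S| ≤
      4 * n := by
  have h_card {e' : Sym2 (Fin n)} (he' : e' ∈ completeEdges n) : #e'.toFinset = 2 :=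
    Sym2.card_toFinset_of_not_isDiag e' (mem_completeEdges.1 he')
  have h_sum : ∑ e' ∈ completeEdges n,
      𝔼 S ∈ kSets n k, centredEdgeInd k e S * centredEdgeInd k e' S = 0 := by
    rw [← expect_sum_comm]
    exact expect_eq_zero fun S hS => by
      rw [← mul_sum, sum_completeEdges_centredEdgeInd hn hS, mul_zero]
  refine (sum_abs_le_two_mul_sum_abs_filter (fun e' => ¬ Disjoint e.toFinset e'.toFinset) h_sum
    fun e₁ h₁ e₂ h₂ hd₁ hd₂ => ?_).trans ?_
  · rw [not_not] at hd₁ hd₂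
    refine expect_centredEdgeInd_mul_congr ?_ ?_
    · rw [h_card h₁, h_card h₂]
    · rw [card_union_of_disjoint hd₁, card_union_of_disjoint hd₂, h_card h₁, h_card h₂]
  · have h_meet := sum_le_card_nsmul {e' ∈ completeEdges n | ¬ Disjoint e.toFinset e'.toFinset}
      (fun e' => |𝔼 S ∈ kSets n k, centredEdgeInd k e S * centredEdgeInd k e' S|) 1 fun e' _ =>
        abs_expect_le_of_forall_abs_le (kSets_nonempty hk) fun S _ => by
          rw [abs_mul]
          exact mul_le_one₀ (abs_centredEdgeInd_le_one hk e S) (abs_nonneg _)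
            (abs_centredEdgeInd_le_one hk e' S)
    rw [nsmul_one] at h_meet
    have h_count : (#{e' ∈ completeEdges n | ¬ Disjoint e.toFinset e'.toFinset} : ℝ) ≤ 2 * n := by
      exact_mod_cast card_filter_not_disjoint_toFinset_le e
    linarith

end Edges

/-! ### The variance of the edge count -/

section Variance

variable {n k : ℕ}

lemma lamP_mul_sq (hn : 2 ≤ n) (M k : ℕ) :
    lamP n M k * n ^ 2 =
      M / Nr n * (1 - M / Nr n) * ((k : ℝ) ^ 2 / 2 * (1 - (k : ℝ) ^ 2 / (n : ℝ) ^ 2)) := by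
  have hN := (Nr_pos hn).ne'
  have hn' : (n : ℝ) ≠ 0 := by positivity
  rw [lamP]
  field_simp

lemma sq_div_sq_sub_Kr_div_Nr (hn : 2 ≤ n) (k : ℕ) :
    (k : ℝ) ^ 2 / (n : ℝ) ^ 2 - Kr k / Nr n = k * (n - k) / ((n : ℝ) ^ 2 * (n - 1)) := by
  have hn' : (2 : ℝ) ≤ n := by exact_mod_cast hn
  have : (n : ℝ) - 1 ≠ 0 := by linarith
  rw [Kr, Nr]
  field_simp
  ring

lemma abs_Kr_mul_one_sub_sub_le (hn : 2 ≤ n) (hk : k ≤ n) :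
    |Kr k * (1 - Kr k / Nr n) - (k : ℝ) ^ 2 / 2 * (1 - (k : ℝ) ^ 2 / (n : ℝ) ^ 2)| ≤ (n : ℝ) := by
  have hn' : (2 : ℝ) ≤ n := by exact_mod_cast hn
  have hk' : (k : ℝ) ≤ n := by exact_mod_cast hk
  have hk0 : (0 : ℝ) ≤ k := Nat.cast_nonneg k
  obtain ⟨hκ0, hκ1⟩ := Kr_div_Nr_mem_Icc hk
  set t := (k : ℝ) ^ 2 / (n : ℝ) ^ 2 - Kr k / Nr n with ht
  have h_diff : Kr k * (1 - Kr k / Nr n) - (k : ℝ) ^ 2 / 2 * (1 - (k : ℝ) ^ 2 / (n : ℝ) ^ 2) =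
      (k : ℝ) ^ 2 / 2 * t - k / 2 * (1 - Kr k / Nr n) := by
    have hK : Kr k = (k : ℝ) ^ 2 / 2 - k / 2 := by rw [Kr]; ring
    linear_combination (1 - Kr k / Nr n) * hK + (k : ℝ) ^ 2 / 2 * ht
  rw [sq_div_sq_sub_Kr_div_Nr hn] at ht
  have ht0 : 0 ≤ t := by
    rw [ht]
    exact div_nonneg (mul_nonneg hk0 (by linarith)) (mul_nonneg (sq_nonneg _) (by linarith))
  have ht1 : t ≤ 1 / n := by
    rw [ht, div_le_div_iff₀ (mul_pos (by positivity) (by linarith)) (by linarith)]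
    have : (k : ℝ) * (n - k) ≤ n * (n - 1) := by nlinarith [sq_nonneg ((n : ℝ) - 2 * k)]
    nlinarith
  have h_main : (k : ℝ) ^ 2 / 2 * t ≤ (n : ℝ) := by
    calc (k : ℝ) ^ 2 / 2 * t ≤ (n : ℝ) ^ 2 / 2 * (1 / n) := by gcongr
      _ = (n : ℝ) / 2 := by field_simp
      _ ≤ (n : ℝ) := by linarith
  have h_lower : k / 2 * (1 - Kr k / Nr n) ≤ (n : ℝ) := by nlinarith
  rw [h_diff, abs_le]
  constructor <;> nlinarith [mul_nonneg hk0 (sub_nonneg.2 hκ1), mul_nonneg (sq_nonneg (k : ℝ)) ht0]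

/-- The first term is the variance of the centred edge count of a fixed `k`-set in `G(n,p)` with
`p = M/N`. -/
lemma abs_variance_sub_lamP_mul_sq_le {M : ℕ} (hn : 2 ≤ n) (hk : k ≤ n) (hM : M ≤ Nr n) :
    |M / Nr n * (1 - M / Nr n) * (Kr k * (1 - Kr k / Nr n)) - lamP n M k * n ^ 2| ≤ (n : ℝ) := by
  obtain ⟨hp0, hp1⟩ := div_Nr_mem_Icc hM
  have hpq0 : 0 ≤ M / Nr n * (1 - M / Nr n) := mul_nonneg hp0 (sub_nonneg.2 hp1)
  rw [lamP_mul_sq hn, ← mul_sub, abs_mul, abs_of_nonneg hpq0]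
  exact (mul_le_of_le_one_left (abs_nonneg _)
    (mul_le_one₀ hp1 (sub_nonneg.2 hp1) (sub_le_self 1 hp0))).trans
      (abs_Kr_mul_one_sub_sub_le hn hk)

end Variance

/-! ### The smoothed distribution function of the edge count -/

section SmoothedEdgeCdf

variable {n k M : ℕ} {s : ℝ}

/-- The distribution function at `z` of the centred edge count `e(S) - K·#G/N` of a uniformly random
`k`-set `S`, convolved with the centred normal law of standard deviation `s`. -/
def smoothedEdgeCdf (k : ℕ) (s z : ℝ) (G : Finset (Sym2 (Fin n))) : ℝ :=
  smoothedCdf (kSets n k) (centredEdgeInd k) (s ^ 2) z G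

lemma smoothedEdgeCdf_eq_expect (hs : 0 ≤ s) (z : ℝ) (G : Finset (Sym2 (Fin n))) :
    smoothedEdgeCdf k s (z - muP n #G k) G = 𝔼 S ∈ kSets n k, Φ ((z - edgesIn G S) / s) := by
  simp only [smoothedEdgeCdf, smoothedCdf, sum_centredEdgeInd, sub_sub_sub_cancel_right,
    Real.sqrt_sq hs]

lemma sum_sq_discreteDeriv_smoothedEdgeCdf_le (hn : 2 ≤ n) (hk : k ≤ n) (hns : n ≤ s ^ 2) (z : ℝ)
    (G : Finset (Sym2 (Fin n))) :
    ∑ e ∈ completeEdges n, discreteDeriv e (smoothedEdgeCdf k s z) G ^ 2 ≤ 9 * n / s ^ 2 := by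
  have hn' : (2 : ℝ) ≤ n := by exact_mod_cast hn
  have hs : 0 < s ^ 2 := by linarith
  have h_edges : 2 * (#(completeEdges n) : ℝ) ≤ n * s ^ 2 := by
    rw [card_completeEdges, Nr]
    nlinarith
  refine (sum_sq_discreteDeriv_smoothedCdf_le (kSets_nonempty hk) hs
    (fun e _ S _ => abs_centredEdgeInd_le_one hk e S) (by positivity)
    (fun e _ => sum_abs_expect_centredEdgeInd_mul_le hn hk e) z G).trans ?_
  calc 2 * (4 * n) / s ^ 2 + 2 * #(completeEdges n) / (s ^ 2) ^ 2
      ≤ 2 * (4 * n) / s ^ 2 + n * s ^ 2 / (s ^ 2) ^ 2 := by gcongr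
    _ = 9 * n / s ^ 2 := by
        field_simp
        ring

lemma abs_bernoulliExp_smoothedEdgeCdf_sub_le (hn : 2 ≤ n) (hk : k ≤ n) (hM : M ≤ Nr n)
    (hlam : 0 < lamP n M k) (hs : 0 ≤ s) (hns : n ≤ s ^ 2) (z : ℝ) :
    |bernoulliExp (M / Nr n) (completeEdges n) (smoothedEdgeCdf k s z) -
        Φ (z / √(lamP n M k * n ^ 2))| ≤
      2 * Nr n / s ^ 3 + 2 * s ^ 2 / (lamP n M k * n ^ 2) := by
  have hn' : (2 : ℝ) ≤ n := by exact_mod_cast hn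
  set V := M / Nr n * (1 - M / Nr n) * (Kr k * (1 - Kr k / Nr n))
  obtain ⟨hV_lower, hV_upper⟩ := abs_le.1 (abs_variance_sub_lamP_mul_sq_le hn hk hM)
  have h_mean := abs_bernoulliExp_smoothedCdf_sub_le (v := s ^ 2) (div_Nr_mem_Icc hM)
    (kSets_nonempty hk) (by linarith) (fun e _ S _ => abs_centredEdgeInd_le_one hk e S)
    (fun S hS => sum_completeEdges_centredEdgeInd hn hS)
    (fun S hS => sum_completeEdges_centredEdgeInd_sq hn hS) z
  rw [card_completeEdges, Real.sqrt_sq hs] at h_mean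
  have h_var : |Φ (z / √(s ^ 2 + V)) - Φ (z / √(lamP n M k * n ^ 2))| ≤
      2 * s ^ 2 / (lamP n M k * n ^ 2) :=
    (abs_stdNormalCdf_div_sqrt_sub_div_sqrt_le (by positivity) (by linarith) z).trans (by
      gcongr
      linarith)
  exact (abs_sub_le _ _ _).trans (add_le_add h_mean h_var)

lemma Pru_graphsM_exists_le_abs_smoothedEdgeCdf_sub_le (hn : 2 ≤ n) (hk : k ≤ n) (hM : M ≤ Nr n)
    (hs : 0 ≤ s) (hns : n ≤ s ^ 2) (Z : Finset ℝ) (x : ℝ) :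
    Pru (graphsM n M) (fun G => ∃ z ∈ Z, 3 * x * √n / s ≤ |smoothedEdgeCdf k s z G -
        bernoulliExp (M / Nr n) (completeEdges n) (smoothedEdgeCdf k s z)|) ≤
      (Nr n + 1) * (#Z * (2 * Real.exp (1 - x))) := by
  have hN := Nr_pos hn
  have hn' : (2 : ℝ) ≤ n := by exact_mod_cast hn
  have h_scale : x * √(9 * n / s ^ 2) = 3 * x * √n / s := by
    rw [Real.sqrt_div' _ (sq_nonneg s), Real.sqrt_sq hs, Real.sqrt_mul (by norm_num),
      show (9 : ℝ) = 3 ^ 2 by norm_num, Real.sqrt_sq (by norm_num)]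
    ring
  rw [← card_completeEdges] at hN
  have h_slice := Pru_powersetCard_le (card_pos.1 (Nat.cast_pos.1 hN))
    (by rwa [← card_completeEdges, Nat.cast_le] at hM : M ≤ #(completeEdges n))
    (fun G => ∃ z ∈ Z, 3 * x * √n / s ≤ |smoothedEdgeCdf k s z G -
      bernoulliExp (M / Nr n) (completeEdges n) (smoothedEdgeCdf k s z)|)
  rw [← graphsM_eq_powersetCard, card_completeEdges] at h_slice
  refine h_slice.trans (mul_le_mul_of_nonneg_left ?_ (by linarith [Nr_pos hn]))
  refine (bernoulliPr_exists_le (div_Nr_mem_Icc hM) Z _).trans ?_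
  rw [← nsmul_eq_mul]
  refine sum_le_card_nsmul _ _ _ fun z _ => ?_
  rw [← h_scale]
  exact bernoulliPr_le_abs_sub_bernoulliExp_le (div_Nr_mem_Icc hM) (by
    have : 0 < s ^ 2 := by linarith
    positivity) (fun G _ => sum_sq_discreteDeriv_smoothedEdgeCdf_le hn hk hns z G) x

lemma edgesIn_le_card (G : Finset (Sym2 (Fin n))) (S : Finset (Fin n)) : edgesIn G S ≤ #G :=
  card_filter_le _ _

lemma abs_Pru_edgesIn_le_sub_le {G : Finset (Sym2 (Fin n))} {r t σ : ℝ} (hk : k ≤ n) (hs : 0 ≤ s)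
    (hr : 0 ≤ r) (hσ : 0 ≤ σ)
    (h : ∀ j ∈ Icc (-1 : ℤ) #G, ∀ y ∈ ({j - r, j + r} : Set ℝ),
      |smoothedEdgeCdf k s (y - muP n #G k) G - Φ ((y - muP n #G k) / σ)| ≤ t) (z : ℝ) :
    |Pru (kSets n k) (fun S => (edgesIn G S : ℝ) ≤ z) - Φ ((z - muP n #G k) / σ)| ≤
      t + 1 / σ * r + Real.exp (-(r / s) ^ 2 / 2) + 1 / σ := by
  have h_lip (x y : ℝ) : |Φ ((y - muP n #G k) / σ) - Φ ((x - muP n #G k) / σ)| ≤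
      1 / σ * |y - x| := by
    refine (abs_stdNormalCdf_sub_le _ _).trans_eq ?_
    rw [← sub_div, sub_sub_sub_cancel_right, abs_div, abs_of_nonneg hσ, one_div_mul_eq_div]
  refine abs_Pru_natCast_le_sub_le (kSets_nonempty hk) (fun S _ => edgesIn_le_card G S)
    (F := fun y => Φ ((y - muP n #G k) / σ)) (monotone_stdNormalCdf.comp fun x y hxy => by gcongr)
    (fun y => ⟨stdNormalCdf_nonneg _, stdNormalCdf_le_one _⟩) (by positivity) h_lip
    (fun j hj => ?_) z
  have h_point := abs_Pru_sub_le_of_abs_expect_stdNormalCdf_sub_le (v := s ^ 2)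
    (X := fun S => (edgesIn G S : ℝ)) (F := fun y => Φ ((y - muP n #G k) / σ))
    (kSets_nonempty hk) hr h_lip fun y hy => by
      rw [Real.sqrt_sq hs, ← smoothedEdgeCdf_eq_expect hs]
      exact h j hj y hy
  rwa [Real.sqrt_sq hs] at h_point

end SmoothedEdgeCdf

/-! ### Uniform normal approximation in `G_{n,M}` -/

section FixedEdgeNumber

variable {n k M : ℕ} {s : ℝ}

lemma Pru_mono {α : Type*} {Ω : Finset α} {P Q : α → Prop} (h : ∀ a ∈ Ω, P a → Q a) :
    Pru Ω P ≤ Pru Ω Q := by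
  classical
  rw [Pru, Pru]
  gcongr ?_ / _
  exact_mod_cast card_le_card fun a ha =>
    mem_filter.2 ⟨(mem_filter.1 ha).1, h a (mem_filter.1 ha).1 (mem_filter.1 ha).2⟩

lemma Pru_not {α : Type*} {Ω : Finset α} (hΩ : Ω.Nonempty) (P : α → Prop) :
    Pru Ω (fun a => ¬ P a) = 1 - Pru Ω P := by
  classical
  have h_card : (#Ω : ℝ) ≠ 0 := Nat.cast_ne_zero.2 hΩ.card_ne_zero
  rw [Pru, Pru, eq_sub_iff_add_eq', ← add_div, ← Nat.cast_add, card_filter_add_card_filter_not,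
    div_self h_card]

/-- The points `j ± r - μ`, `-1 ≤ j ≤ M`, at which the smoothed distribution function of the edge
count has to be controlled. -/
def smoothingPoints (M : ℕ) (r μ : ℝ) : Finset ℝ :=
  (Icc (-1 : ℤ) M).biUnion fun j => {j - r - μ, j + r - μ}

lemma card_smoothingPoints_le (M : ℕ) (r μ : ℝ) : #(smoothingPoints M r μ) ≤ 2 * (M + 2) := by
  refine (card_biUnion_le_card_mul _ _ 2 fun j _ => card_le_two).trans_eq ?_
  rw [Int.card_Icc, mul_comm]
  congr 1

/-- The error terms are, in this order: fluctuation of the smoothed distribution function,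
approximation of its mean, mismatch of the variances, removal of the smoothing together with
discretisation, and the tail of the smoothing kernel. -/
theorem one_sub_le_Pru_graphsM_forall_abs_Pru_edgesIn_le_sub_gaussCdf_le (hn : 2 ≤ n) (hk : k ≤ n)
    (hM : M ≤ Nr n) (hlam : 0 < lamP n M k) (hs : 0 < s) (hns : n ≤ s ^ 2) {x : ℝ} (hx : 0 ≤ x) :
    1 - (Nr n + 1) * (2 * (M + 2) * (2 * Real.exp (1 - x))) ≤
      Pru (graphsM n M) (fun G => ∀ z : ℝ,
        |Pru (kSets n k) (fun S => (edgesIn G S : ℝ) ≤ z) -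
          gaussCdf (muP n M k) (lamP n M k * n ^ 2) z| ≤
        3 * x * √n / s + 2 * Nr n / s ^ 3 + 2 * s ^ 2 / (lamP n M k * n ^ 2) +
          (x * s + 1) / √(lamP n M k * n ^ 2) + Real.exp (-x ^ 2 / 2)) := by
  set Z := smoothingPoints M (x * s) (muP n M k)
  have hN := Nr_pos hn
  have h_nonempty : (graphsM n M).Nonempty := by
    rw [graphsM_eq_powersetCard, powersetCard_nonempty]
    rwa [← card_completeEdges, Nat.cast_le] at hM
  have h_fail := Pru_graphsM_exists_le_abs_smoothedEdgeCdf_sub_le hn hk hM hs.le hns Z x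
  have h_card : (#Z : ℝ) ≤ 2 * (M + 2) := by exact_mod_cast card_smoothingPoints_le _ _ _
  calc 1 - (Nr n + 1) * (2 * (M + 2) * (2 * Real.exp (1 - x)))
      ≤ 1 - (Nr n + 1) * (#Z * (2 * Real.exp (1 - x))) := by gcongr
    _ ≤ _ := sub_le_sub_left h_fail 1
    _ = _ := (Pru_not h_nonempty _).symm
    _ ≤ _ := Pru_mono fun G hG h_good z => ?_
  obtain rfl : #G = M := (mem_powersetCard.1 (graphsM_eq_powersetCard n M ▸ hG)).2
  push Not at h_good
  rw [gaussCdf_eq_stdNormalCdf (by positivity)]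
  set t := 3 * x * √n / s + (2 * Nr n / s ^ 3 + 2 * s ^ 2 / (lamP n #G k * n ^ 2)) with ht
  refine (abs_Pru_edgesIn_le_sub_le (t := t) hk hs.le (mul_nonneg hx hs.le) (Real.sqrt_nonneg _)
    (fun j hj y hy => ?_) z).trans_eq ?_
  · have hyZ : y - muP n #G k ∈ Z := mem_biUnion.2 ⟨j, hj, by
      rcases hy with rfl | rfl <;> simp⟩
    exact (abs_sub_le _ _ _).trans (add_le_add (h_good _ hyZ).le
      (abs_bernoulliExp_smoothedEdgeCdf_sub_le hn hk hM hlam hs.le hns _))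
  · rw [mul_div_cancel_right₀ _ hs.ne', ht]
    ring

end FixedEdgeNumber

/-! ### Choice of parameters -/

section Parameters

lemma pow_five_div_two_le_lamP {n M k : ℕ} {δ : ℝ} (hδ : 0 < δ) (hn : 2 ≤ n)
    (hM_lower : δ ≤ M / Nr n) (hM_upper : M / Nr n ≤ 1 - δ)
    (hk_lower : δ ≤ (k : ℝ) / n) (hk_upper : (k : ℝ) / n ≤ 1 - δ) : δ ^ 5 / 2 ≤ lamP n M k := by
  have hN := Nr_pos hn
  have h_eq : lamP n M k =
      (1 - k / n) * (1 + k / n) * ((k : ℝ) / n) ^ 2 / 2 * (M / Nr n * (1 - M / Nr n)) := by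
    have hn' : (n : ℝ) ≠ 0 := by positivity
    unfold lamP
    field_simp
    ring
  rw [h_eq]
  calc δ ^ 5 / 2 = δ * 1 * δ ^ 2 / 2 * (δ * δ) := by ring
    _ ≤ _ := by
      have : 0 ≤ 1 - (k : ℝ) / n := by linarith
      gcongr <;> linarith

lemma eventually_parameters_large {ε : ℝ} (hε : 0 < ε) (C : ℝ) : ∀ᶠ n : ℕ in Filter.atTop,
    2 ≤ n ∧ C ≤ (n : ℝ) ^ (ε / 2) ∧ 16 * Real.log n ≤ (n : ℝ) ^ (ε / 2) := by
  have h_pow : ∀ᶠ x : ℝ in Filter.atTop, C ≤ x ^ (ε / 2) :=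
    (tendsto_rpow_atTop (half_pos hε)).eventually_ge_atTop C
  have h_log : ∀ᶠ x : ℝ in Filter.atTop, ‖Real.log x‖ ≤ 1 / 16 * ‖x ^ (ε / 2)‖ :=
    (isLittleO_log_rpow_atTop (half_pos hε)).def (by norm_num)
  filter_upwards [Filter.eventually_ge_atTop 2, tendsto_natCast_atTop_atTop.eventually h_pow,
    tendsto_natCast_atTop_atTop.eventually h_log] with n hn hC h
  rw [Real.norm_of_nonneg (Real.rpow_nonneg n.cast_nonneg _)] at h
  exact ⟨hn, hC, by linarith [Real.le_norm_self (Real.log n)]⟩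

lemma failure_probability_le {n M : ℕ} {ε : ℝ} (hn : 2 ≤ n) (hM : M ≤ Nr n)
    (h_large : 16 ≤ (n : ℝ) ^ (ε / 2)) (hlog : 16 * Real.log n ≤ (n : ℝ) ^ (ε / 2)) :
    (Nr n + 1) * (2 * (M + 2) * (2 * Real.exp (1 - (n : ℝ) ^ (ε / 2)))) ≤
      Real.exp (-(n : ℝ) ^ (ε / 4)) := by
  have hn' : (2 : ℝ) ≤ n := by exact_mod_cast hn
  have hN : Nr n + 2 ≤ n ^ 2 := by
    rw [Nr]
    nlinarith
  have h_four : (4 : ℝ) ≤ Real.exp 2 := by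
    rw [show (2 : ℝ) = 1 + 1 by norm_num, Real.exp_add]
    nlinarith [Real.add_one_le_exp (1 : ℝ)]
  have h_pow : (n : ℝ) ^ 4 = Real.exp (4 * Real.log n) := by
    rw [mul_comm, Real.exp_mul, Real.exp_log (by linarith)]
    norm_cast
  have h_sq : (n : ℝ) ^ (ε / 2) = ((n : ℝ) ^ (ε / 4)) ^ 2 := by
    rw [← Real.rpow_mul_natCast n.cast_nonneg]
    ring_nf
  have h_root : (n : ℝ) ^ (ε / 4) ≤ (n : ℝ) ^ (ε / 2) / 4 := by
    nlinarith [Real.rpow_nonneg (n.cast_nonneg : (0 : ℝ) ≤ n) (ε / 4)]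
  set x := (n : ℝ) ^ (ε / 2)
  calc (Nr n + 1) * (2 * (M + 2) * (2 * Real.exp (1 - x)))
      ≤ n ^ 2 * (2 * n ^ 2 * (2 * Real.exp (1 - x))) := by gcongr <;> linarith
    _ = 4 * n ^ 4 * Real.exp (1 - x) := by ring
    _ ≤ Real.exp 2 * Real.exp (4 * Real.log n) * Real.exp (1 - x) := by
        rw [← h_pow]
        gcongr
    _ = Real.exp (2 + 4 * Real.log n + (1 - x)) := by rw [Real.exp_add, Real.exp_add]
    _ ≤ Real.exp (-(n : ℝ) ^ (ε / 4)) := Real.exp_le_exp.2 (by linarith)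

/-- The smoothing scale `s = n^(3/4)`, written as `q³` with `q = n^(1/4)`, balances the fluctuations
`√n/s` against the smoothing error `s/n`. -/
lemma error_terms_le {q x c l : ℝ} (hq : 1 ≤ q) (hx : 1 ≤ x) (hc : 0 < c) (hl : c ≤ l)
    (h_tail : Real.exp (-x ^ 2 / 2) ≤ 1 / q) :
    3 * x * √(q ^ 4) / q ^ 3 + q ^ 4 * (q ^ 4 - 1) / (q ^ 3) ^ 3 +
        2 * (q ^ 3) ^ 2 / (l * (q ^ 4) ^ 2) + (x * q ^ 3 + 1) / √(l * (q ^ 4) ^ 2) +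
        Real.exp (-x ^ 2 / 2) ≤
      (5 + 2 / c + 2 / √c) * (x / q) := by
  have : 0 < q := by linarith
  have hl0 : 0 < l := by linarith
  have h_inv : 1 / q ≤ x / q := by gcongr
  have h_fluct : 3 * x * √(q ^ 4) / q ^ 3 = 3 * (x / q) := by
    rw [show q ^ 4 = (q ^ 2) ^ 2 by ring, Real.sqrt_sq (by positivity)]
    field_simp
  have h_mean : q ^ 4 * (q ^ 4 - 1) / (q ^ 3) ^ 3 ≤ 1 / q := by
    calc q ^ 4 * (q ^ 4 - 1) / (q ^ 3) ^ 3 ≤ q ^ 4 * q ^ 4 / (q ^ 3) ^ 3 := by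
          gcongr
          linarith
      _ = 1 / q := by field_simp
  have h_var : 2 * (q ^ 3) ^ 2 / (l * (q ^ 4) ^ 2) ≤ 2 / c * (x / q) := by
    calc 2 * (q ^ 3) ^ 2 / (l * (q ^ 4) ^ 2) = 2 / l * (1 / q / q) := by field_simp
      _ ≤ 2 / c * (x / q) := by
        gcongr
        exact (div_le_self (by positivity) hq).trans hx
  have h_smooth : (x * q ^ 3 + 1) / √(l * (q ^ 4) ^ 2) ≤ 2 / √c * (x / q) := by
    have h_one : 1 ≤ x * q ^ 3 := one_le_mul_of_one_le_of_one_le hx (one_le_pow₀ hq)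
    rw [Real.sqrt_mul hl0.le, Real.sqrt_sq (by positivity)]
    calc (x * q ^ 3 + 1) / (√l * q ^ 4) ≤ 2 * (x * q ^ 3) / (√c * q ^ 4) := by
          gcongr
          linarith
      _ = 2 / √c * (x / q) := by field_simp
  linarith

lemma exp_neg_sq_div_two_le_rpow_neg {y x : ℝ} (hy : 0 < y) (hx : 1 ≤ x)
    (hlog : 16 * Real.log y ≤ x) : Real.exp (-x ^ 2 / 2) ≤ y ^ (-(1 / 4) : ℝ) := by
  rw [Real.rpow_def_of_pos hy, Real.exp_le_exp]
  nlinarith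

lemma error_le_rpow {n : ℕ} {ε c l : ℝ} (hn : 1 ≤ n) (hε : 0 ≤ ε) (hc : 0 < c) (hl : c ≤ l)
    (h_const : 5 + 2 / c + 2 / √c ≤ (n : ℝ) ^ (ε / 2))
    (hlog : 16 * Real.log n ≤ (n : ℝ) ^ (ε / 2)) :
    3 * (n : ℝ) ^ (ε / 2) * √n / n ^ (3 / 4 : ℝ) + 2 * Nr n / (n ^ (3 / 4 : ℝ)) ^ 3 +
        2 * (n ^ (3 / 4 : ℝ)) ^ 2 / (l * n ^ 2) +
        ((n : ℝ) ^ (ε / 2) * n ^ (3 / 4 : ℝ) + 1) / √(l * n ^ 2) +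
        Real.exp (-((n : ℝ) ^ (ε / 2)) ^ 2 / 2) ≤
      (n : ℝ) ^ (-(1 / 4 : ℝ) + ε) := by
  have hn' : (1 : ℝ) ≤ n := by exact_mod_cast hn
  have hn0 : (0 : ℝ) < n := by linarith
  have hx : 1 ≤ (n : ℝ) ^ (ε / 2) := Real.one_le_rpow hn' (div_nonneg hε zero_le_two)
  have h_tail := exp_neg_sq_div_two_le_rpow_neg hn0 hx hlog
  set x := (n : ℝ) ^ (ε / 2)
  set q := (n : ℝ) ^ (1 / 4 : ℝ) with hq_def
  have hq : 1 ≤ q := Real.one_le_rpow hn' (by norm_num)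
  have hqn : (n : ℝ) = q ^ 4 := by
    rw [hq_def, ← Real.rpow_mul_natCast hn0.le]
    norm_num
  have hqs : (n : ℝ) ^ (3 / 4 : ℝ) = q ^ 3 := by
    rw [hq_def, ← Real.rpow_mul_natCast hn0.le]
    norm_num
  have h_target : (n : ℝ) ^ (-(1 / 4 : ℝ) + ε) = x * (x / q) := by
    rw [Real.rpow_add hn0, Real.rpow_neg hn0.le, ← add_halves ε, Real.rpow_add hn0]
    ring
  rw [Real.rpow_neg hn0.le, ← one_div] at h_tail
  rw [h_target, hqs, Nr, mul_div_cancel₀ _ two_ne_zero, hqn]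
  exact (error_terms_le hq hx hc hl h_tail).trans (by gcongr)

end Parameters

/-- CLT for induced edge counts, Theorem 1.1.
For fixed `δ, ε > 0` there are `η > 0` and `n₀` such that for all `n ≥ n₀` and all `M, k`
with `M/N, k/n ∈ [δ, 1-δ]`, with probability at least `1 - exp(-n^η)` over `G = G_{n,M}`:
for all `z ∈ ℝ`, `|P_S(e(S) ≤ z) - P(Z ≤ z)| ≤ n^(-1/4+ε)`, where `S` is a uniform `k`-subset
of `[n]` and `Z ~ N(K·M/N, λ·n²)`. -/
theorem stmt_0 (δ ε : ℝ) (hδ : 0 < δ) (hε : 0 < ε) :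
    ∃ η > (0:ℝ), ∃ n₀ : ℕ, ∀ n ≥ n₀, ∀ M k : ℕ,
      δ ≤ (M : ℝ) / Nr n → (M : ℝ) / Nr n ≤ 1 - δ →
      δ ≤ (k : ℝ) / n → (k : ℝ) / n ≤ 1 - δ →
      PrGnM n M (fun G => ∀ z : ℝ,
          |Pru (kSets n k) (fun S => (edgesIn G S : ℝ) ≤ z) -
            gaussCdf (muP n M k) (lamP n M k * (n:ℝ) ^ 2) z|
          ≤ (n : ℝ) ^ (-(1/4 : ℝ) + ε))
        ≥ 1 - Real.exp (-(n : ℝ) ^ η) := by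
  obtain ⟨n₀, hn₀⟩ := Filter.eventually_atTop.1 (eventually_parameters_large hε
    (max 16 (5 + 2 / (δ ^ 5 / 2) + 2 / √(δ ^ 5 / 2))))
  refine ⟨ε / 4, by positivity, n₀, fun n hnn M k hM_lower hM_upper hk_lower hk_upper => ?_⟩
  obtain ⟨hn, hC, hlog⟩ := hn₀ n hnn
  obtain ⟨h_large, h_const⟩ := max_le_iff.1 hC
  have hn1 : (1 : ℝ) ≤ n := by exact_mod_cast one_le_two.trans hn
  have hk : k ≤ n := Nat.cast_le.1 ((div_le_one (by linarith)).1 (by linarith : (k : ℝ) / n ≤ 1))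
  have hM : M ≤ Nr n := (div_le_one (Nr_pos hn)).1 (by linarith)
  have hlam := pow_five_div_two_le_lamP hδ hn hM_lower hM_upper hk_lower hk_upper
  refine (sub_le_sub_left (failure_probability_le hn hM h_large hlog) 1).trans ?_
  refine (one_sub_le_Pru_graphsM_forall_abs_Pru_edgesIn_le_sub_gaussCdf_le hn hk hM
    (hlam.trans_lt' (by positivity)) (by positivity : 0 < (n : ℝ) ^ (3 / 4 : ℝ)) ?_
    (Real.rpow_nonneg n.cast_nonneg _)).trans ?_
  · rw [← Real.rpow_mul_natCast n.cast_nonneg]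
    exact Real.self_le_rpow_of_one_le hn1 (by norm_num)
  · exact Pru_mono fun G _ h z => (h z).trans
      (error_le_rpow (one_le_two.trans hn) hε.le (by positivity) hlam h_const hlog)
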